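/- arXiv:1707.01458 — 2 statements merged into one kernel-verified Lean document; each statement's English description precedes it below -/
import Mathlib

section
/- Assume the curve setup with counterclockwise orientation, and assume the curve is strictly convex in the sense that (l(s) − l(t))·n(s) > 0 whenever l(s) ≠ l(t), and l''(s)·n(s) < 0 for all s. Let a well-* distributed mesh with parameters κ ≥ 2 and M > 0 be given and define A_N(i,j) = ((l(s̃_i^N) − l(s_j^N))·n(s̃_i^N))/‖l(s̃_i^N) − l(s_j^N)‖² when l(s̃_i^N) ≠ l(s_j^N), and A_N(i,j) = −(1/2)·l''(s̃_i^N)·n(s̃_i^N) when l(s̃_i^N) = l(s_j^N). Then there exists N₀ such that for every N ≥ N₀ the matrix M_N = (L/N)·A_N + π·I is strictly diagonally dominant with respect to columns: for every 1 ≤ j ≤ N, Σ_{i=1, i≠j}^{N} |M_N(i,j)| < |M_N(j,j)|. -/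
open Real MeasureTheory

/-- Dot product of two points of the plane `ℝ² ≃ ℂ`. -/
noncomputable def dotR (z w : ℂ) : ℝ := z.re * w.re + z.im * w.im

/-- The unit normal vector `n(s) = (l₂'(s), -l₁'(s))` of a curve `l`. -/
noncomputable def normalv (l : ℝ → ℂ) (s : ℝ) : ℂ := -Complex.I * deriv l s

open Classical in
/-- The discretized double layer matrix, with the continuous extension
`-(1/2)·l''·n` of the kernel on the diagonal. -/
noncomputable def AmatE (l : ℝ → ℂ) {N : ℕ} (a b : Fin N → ℝ) : Matrix (Fin N) (Fin N) ℝ :=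
  Matrix.of fun i j =>
    if l (a i) = l (b j) then -(1/2) * dotR (deriv (deriv l) (a i)) (normalv l (a i))
    else dotR (l (a i) - l (b j)) (normalv l (a i)) / ‖l (a i) - l (b j)‖ ^ 2


/-- Hadamard-type integrals: `GG l 0 s t = (l t - l s)/(t-s)`, `GG l k` its derivatives in `t`. -/
noncomputable def GG (l : ℝ → ℂ) (k : ℕ) (s t : ℝ) : ℂ :=
  ∫ u in (0:ℝ)..1, ((u:ℂ)^k) * iteratedDeriv (k+1) l (s + u*(t-s))

theorem itd_cont (l : ℝ → ℂ) (hsm : ContDiff ℝ (⊤ : ℕ∞) l) (k : ℕ) :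
    Continuous (iteratedDeriv k l) :=
  hsm.continuous_iteratedDeriv k (by exact_mod_cast le_top)

theorem itd_deriv (l : ℝ → ℂ) (hsm : ContDiff ℝ (⊤ : ℕ∞) l) (k : ℕ) (x : ℝ) :
    HasDerivAt (iteratedDeriv k l) (iteratedDeriv (k+1) l x) x := by
  rw [iteratedDeriv_succ]
  exact (hsm.differentiable_iteratedDeriv k
    (by exact_mod_cast WithTop.coe_lt_top k) x).hasDerivAt

theorem GG_deriv (l : ℝ → ℂ) (hsm : ContDiff ℝ (⊤ : ℕ∞) l) (k : ℕ) (s t : ℝ) :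
    HasDerivAt (fun t => GG l k s t) (GG l (k+1) s t) t := by
  have hc := itd_cont l hsm
  obtain ⟨C, hC⟩ := (isCompact_Icc (a := -(|s|+(|t|+1+|s|))) (b := |s|+(|t|+1+|s|))).exists_bound_of_continuousOn
    (hc (k+2)).continuousOn
  have key := intervalIntegral.hasDerivAt_integral_of_dominated_loc_of_deriv_le
    (μ := volume) (𝕜 := ℝ) (a := (0:ℝ)) (b := 1) (x₀ := t) (s := Metric.ball t 1)
    (F := fun t u => ((u:ℂ)^k) * iteratedDeriv (k+1) l (s + u*(t-s)))
    (F' := fun t u => ((u:ℂ)^(k+1)) * iteratedDeriv (k+2) l (s + u*(t-s)))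
    (bound := fun _ => C) (Metric.ball_mem_nhds t one_pos) ?_ ?_ ?_ ?_ ?_ ?_
  · exact key.2
  · refine Filter.Eventually.of_forall fun x => Continuous.aestronglyMeasurable ?_
    have := hc (k+1)
    fun_prop
  · apply Continuous.intervalIntegrable
    have := hc (k+1)
    fun_prop
  · apply Continuous.aestronglyMeasurable
    have := hc (k+2)
    fun_prop
  · refine Filter.Eventually.of_forall fun u hu x hx => ?_
    rw [Set.uIoc_of_le zero_le_one] at hu
    rw [Metric.mem_ball, Real.dist_eq] at hx
    have h1 : |x| ≤ |t| + 1 := by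
      have := abs_add_le (x - t) t
      rw [sub_add_cancel] at this
      linarith
    have h2 : |u * (x - s)| ≤ |t| + 1 + |s| := by
      rw [abs_mul, abs_of_pos hu.1]
      have := abs_sub x s
      nlinarith [abs_nonneg (x - s), hu.2]
    have h3 : |s + u * (x-s)| ≤ |s|+(|t|+1+|s|) := (abs_add_le _ _).trans (by linarith)
    have h4 := hC _ (Set.mem_Icc.2 (abs_le.1 h3))
    rw [norm_mul, norm_pow, Complex.norm_real, Real.norm_eq_abs, abs_of_pos hu.1]
    have : u^(k+1) ≤ 1 := pow_le_one₀ hu.1.le hu.2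
    nlinarith [norm_nonneg (iteratedDeriv (k+2) l (s + u*(x-s)))]
  · simp
  · refine Filter.Eventually.of_forall fun u hu x hx => ?_
    have h1 : HasDerivAt (fun x : ℝ => s + u*(x-s)) u x := by
      simpa using (((hasDerivAt_id x).sub_const s).const_mul u).const_add s
    have h2 := ((itd_deriv l hsm (k+1) (s+u*(x-s))).scomp x h1).const_mul ((u:ℂ)^k)
    refine HasDerivAt.congr_deriv (f' := (u:ℂ)^k * (u • iteratedDeriv (k+1+1) l (s+u*(x-s)))) h2 ?_
    rw [Complex.real_smul]
    ring

theorem GG_zero (l : ℝ → ℂ) (hsm : ContDiff ℝ (⊤ : ℕ∞) l) (s t : ℝ) :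
    ((t - s : ℝ) : ℂ) * GG l 0 s t = l t - l s := by
  have h : ∀ u : ℝ, HasDerivAt (fun u : ℝ => l (s + u*(t-s)))
      (((t-s:ℝ):ℂ) * ((u:ℂ)^0 * iteratedDeriv (0+1) l (s + u*(t-s)))) u := by
    intro u
    have h1 : HasDerivAt (fun u : ℝ => s + u*(t-s)) (t-s) u := by
      simpa using ((hasDerivAt_id u).mul_const (t-s)).const_add s
    have h2 := (itd_deriv l hsm 0 (s+u*(t-s))).scomp u h1
    simp only [iteratedDeriv_zero, Complex.real_smul] at h2
    simpa [Function.comp_def] using! h2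
  have h3 := intervalIntegral.integral_eq_sub_of_hasDerivAt (a := 0) (b := 1) (fun u _ => h u) ?_
  · rw [GG, ← intervalIntegral.integral_const_mul, h3]
    simp
  · apply Continuous.intervalIntegrable
    have := itd_cont l hsm (0+1)
    fun_prop

theorem GG_cont (l : ℝ → ℂ) (hsm : ContDiff ℝ (⊤ : ℕ∞) l) (k : ℕ) :
    Continuous (fun p : ℝ × ℝ => GG l k p.1 p.2) := by
  unfold GG
  apply intervalIntegral.continuous_parametric_intervalIntegral_of_continuous'
  have := itd_cont l hsm (k+1)
  fun_prop

theorem GG_diag0 (l : ℝ → ℂ) (s : ℝ) : GG l 0 s s = deriv l s := by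
  simp [GG, iteratedDeriv_one]

theorem GG_diag1 (l : ℝ → ℂ) (s : ℝ) : GG l 1 s s = deriv (deriv l) s / 2 := by
  have : iteratedDeriv 2 l = deriv (deriv l) := by
    rw [iteratedDeriv_succ, iteratedDeriv_one]
  have h2 : (∫ u in (0:ℝ)..1, (u:ℂ)) = 1/2 := by
    rw [intervalIntegral.integral_ofReal]
    norm_num
  simp only [GG, sub_self, mul_zero, add_zero, pow_one]
  rw [intervalIntegral.integral_mul_const, h2, show (1+1) = 2 from rfl, this]
  ring

theorem inj_lt (L : ℝ) (hL : 0 < L) (l : ℝ → ℂ) (hper : ∀ s, l (s + L) = l s)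
    (hinj : Set.InjOn l (Set.Ico 0 L)) (s t : ℝ) (h : l s = l t) (h1 : |t - s| < L) : t = s := by
  have hp : Function.Periodic l L := hper
  have e : ∀ x, l (toIcoMod hL 0 x) = l x := by
    intro x
    rw [toIcoMod]
    exact hp.sub_zsmul_eq _
  have m : ∀ x, toIcoMod hL 0 x ∈ Set.Ico 0 L := by
    intro x
    simpa using toIcoMod_mem_Ico hL 0 x
  have h2 := hinj (m s) (m t) (by rw [e, e, h])
  have h3 : ∃ n : ℤ, t - s = n * L := by
    refine ⟨toIcoDiv hL 0 t - toIcoDiv hL 0 s, ?_⟩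
    simp only [toIcoMod, zsmul_eq_mul] at h2
    push_cast
    linarith
  obtain ⟨n, hn⟩ := h3
  rw [hn, abs_mul, abs_of_pos hL] at h1
  have h4 : |(n:ℝ)| < 1 := by
    by_contra hcon
    push Not at hcon
    nlinarith
  have h5 : n = 0 := by
    have : |n| < 1 := by exact_mod_cast h4
    exact Int.abs_lt_one_iff.1 this
  rw [h5] at hn
  push_cast at hn
  linarith

/-- midpoint rule with perturbed node -/
theorem midpoint_bound (θ K K1 K2 : ℝ → ℝ) (B a h m δ : ℝ) (hh : 0 < h)
    (hm : m ∈ Set.Icc a (a+h)) (hδ : |m - (a+h/2)| ≤ δ)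
    (h0 : ∀ t ∈ Set.Icc a (a+h), HasDerivAt θ (K t) t)
    (h1 : ∀ t ∈ Set.Icc a (a+h), HasDerivAt K (K1 t) t)
    (h2 : ∀ t ∈ Set.Icc a (a+h), HasDerivAt K1 (K2 t) t)
    (b1 : ∀ t ∈ Set.Icc a (a+h), |K1 t| ≤ B)
    (b2 : ∀ t ∈ Set.Icc a (a+h), |K2 t| ≤ B) :
    h * K m ≤ θ (a+h) - θ a + (B * h^3 + B * h * δ) := by
  set c := a + h/2 with hc
  have hcm : c ∈ Set.Icc a (a+h) := ⟨by linarith, by linarith⟩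
  have cv : Convex ℝ (Set.Icc a (a+h)) := convex_Icc a (a+h)
  have hB : 0 ≤ B := (abs_nonneg _).trans (b1 m hm)
  have hd : ∀ t ∈ Set.Icc a (a+h), |t - c| ≤ h := fun t ht =>
    abs_le.2 ⟨by linarith [ht.1], by linarith [ht.2]⟩
  have e1 : |K m - K c| ≤ B * |m - c| := by
    simpa using cv.norm_image_sub_le_of_norm_hasDerivWithin_le
      (fun t ht => (h1 t ht).hasDerivWithinAt) (fun t ht => b1 t ht) hcm hm
  have e2 : ∀ t ∈ Set.Icc a (a+h), |K1 t - K1 c| ≤ B * h := by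
    intro t ht
    have : |K1 t - K1 c| ≤ B * |t - c| := by
      simpa using cv.norm_image_sub_le_of_norm_hasDerivWithin_le
        (fun t ht => (h2 t ht).hasDerivWithinAt) (fun t ht => b2 t ht) hcm ht
    exact this.trans (mul_le_mul_of_nonneg_left (hd t ht) hB)
  have e3 : ∀ t ∈ Set.Icc a (a+h), |K t - K c - K1 c * (t - c)| ≤ B * h * h := by
    intro t ht
    have : |(K t - K1 c * (t - c)) - (K c - K1 c * (c - c))| ≤ B * h * |t - c| := by
      refine cv.norm_image_sub_le_of_norm_hasDerivWithin_le (f := fun t => K t - K1 c * (t - c))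
        (f' := fun t => K1 t - K1 c)
        (fun t ht => ?_) (fun t ht => e2 t ht) hcm ht
      have := (h1 t ht).sub (((hasDerivAt_id t).sub_const c).const_mul (K1 c))
      simp only [mul_one] at this
      exact this.hasDerivWithinAt
    have h5 := this.trans (mul_le_mul_of_nonneg_left (hd t ht) (by positivity))
    have e : (K t - K1 c * (t - c)) - (K c - K1 c * (c - c)) = K t - K c - K1 c * (t - c) := by ring
    rw [e] at h5
    exact h5
  have e4 : |(θ (a+h) - K c * (a+h) - K1 c * ((a+h) - c)^2/2) - (θ a - K c * a - K1 c * (a - c)^2/2)|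
      ≤ B * h * h * |a + h - a| := by
    refine cv.norm_image_sub_le_of_norm_hasDerivWithin_le
      (f := fun t => θ t - K c * t - K1 c * (t - c)^2/2)
      (f' := fun t => K t - K c - K1 c * (t - c))
      (fun t ht => ?_) (fun t ht => e3 t ht) ⟨le_refl _, by linarith⟩ ⟨by linarith, le_refl _⟩
    have := ((h0 t ht).sub ((hasDerivAt_id t).const_mul (K c))).sub
      (((((hasDerivAt_id t).sub_const c).pow 2).const_mul (K1 c)).div_const 2)
    refine HasDerivAt.hasDerivWithinAt (this.congr_deriv ?_)
    simp
    ring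
  have e5 : (θ (a+h) - K c * (a+h) - K1 c * ((a+h) - c)^2/2) - (θ a - K c * a - K1 c * (a - c)^2/2)
    = θ (a+h) - θ a - h * K c := by rw [hc]; ring
  rw [e5, add_sub_cancel_left, abs_of_pos hh] at e4
  have e6 := (abs_le.1 e4).1
  have e7 := (abs_le.1 e1).2
  have e8 : B * |m - c| ≤ B * δ := mul_le_mul_of_nonneg_left hδ hB
  nlinarith

theorem dot_kernel (z w : ℂ) : dotR z (-Complex.I * w) / ‖z‖^2 = (w / z).im := by
  rw [Complex.div_im, Complex.sq_norm]
  simp [dotR]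
  ring

theorem GG_ne (L : ℝ) (hL : 0 < L) (l : ℝ → ℂ)
    (hsm : ContDiff ℝ (⊤ : ℕ∞) l) (hper : ∀ s, l (s + L) = l s)
    (harc : ∀ s, ‖deriv l s‖ = 1) (hinj : Set.InjOn l (Set.Ico 0 L)) (s t : ℝ)
    (h : |t - s| < L) : GG l 0 s t ≠ 0 := by
  intro h0
  have h1 := GG_zero l hsm s t
  rw [h0, mul_zero] at h1
  have h2 := inj_lt L hL l hper hinj s t (sub_eq_zero.1 h1.symm).symm h
  subst h2
  rw [GG_diag0] at h0
  have := harc t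
  rw [h0] at this
  simp at this

theorem kernel_eq (l : ℝ → ℂ) (hsm : ContDiff ℝ (⊤ : ℕ∞) l) (s t : ℝ)
    (hts : t ≠ s) (h0 : GG l 0 s t ≠ 0) :
    (GG l 1 s t / GG l 0 s t).im = (deriv l t / (l t - l s)).im := by
  have h1 : HasDerivAt (fun t : ℝ => ((t - s : ℝ) : ℂ)) 1 t := by
    have := ((hasDerivAt_id t).sub_const s).ofReal_comp
    simpa using! this
  have h2 := h1.mul (GG_deriv l hsm 0 s t)
  have h3 : HasDerivAt (fun t => l t - l s) (deriv l t) t := by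
    have := itd_deriv l hsm 0 t
    rw [iteratedDeriv_zero, zero_add, iteratedDeriv_one] at this
    exact this.sub_const _
  have h4 : (fun t : ℝ => ((t - s : ℝ) : ℂ)) * (fun t => GG l 0 s t) = fun t => l t - l s := by
    funext x
    exact GG_zero l hsm s x
  rw [h4] at h2
  have h5 := h2.unique h3
  rw [← h5, ← GG_zero l hsm s t]
  have hts' : ((t - s : ℝ) : ℂ) ≠ 0 := by
    exact_mod_cast sub_ne_zero.2 hts
  have h6 : (1 * GG l 0 s t + ((t - s : ℝ) : ℂ) * GG l (0+1) s t) / (((t - s : ℝ) : ℂ) * GG l 0 s t)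
    = (((t-s)⁻¹ : ℝ) : ℂ) + GG l 1 s t / GG l 0 s t := by
    push_cast at hts' ⊢
    field_simp
  rw [h6, Complex.add_im, Complex.ofReal_im, zero_add]

noncomputable def W1 (l : ℝ → ℂ) (s t : ℝ) : ℂ :=
  (GG l 2 s t * GG l 0 s t - GG l 1 s t * GG l 1 s t) / (GG l 0 s t)^2

noncomputable def W2 (l : ℝ → ℂ) (s t : ℝ) : ℂ :=
  ((GG l 3 s t * GG l 0 s t + GG l 2 s t * GG l 1 s t
    - (GG l 2 s t * GG l 1 s t + GG l 1 s t * GG l 2 s t)) * (GG l 0 s t)^2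
   - (GG l 2 s t * GG l 0 s t - GG l 1 s t * GG l 1 s t) * (2 * GG l 0 s t * GG l 1 s t))
    / ((GG l 0 s t)^2)^2

theorem im_deriv {f : ℝ → ℂ} {f' : ℂ} {t : ℝ} (h : HasDerivAt f f' t) :
    HasDerivAt (fun t => (f t).im) f'.im t :=
  (Complex.imCLM.hasFDerivAt (x := f t)).comp_hasDerivAt t h

theorem W0_deriv (l : ℝ → ℂ) (hsm : ContDiff ℝ (⊤ : ℕ∞) l) (s t : ℝ) (h0 : GG l 0 s t ≠ 0) :
    HasDerivAt (fun t => (GG l 1 s t / GG l 0 s t).im) (W1 l s t).im t :=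
  im_deriv ((GG_deriv l hsm 1 s t).div (GG_deriv l hsm 0 s t) h0)

theorem W1_deriv (l : ℝ → ℂ) (hsm : ContDiff ℝ (⊤ : ℕ∞) l) (s t : ℝ) (h0 : GG l 0 s t ≠ 0) :
    HasDerivAt (fun t => (W1 l s t).im) (W2 l s t).im t := by
  apply im_deriv
  have d0 := GG_deriv l hsm 0 s t
  have d1 := GG_deriv l hsm 1 s t
  have d2 := GG_deriv l hsm 2 s t
  refine ((((d2.mul d0).sub (d1.mul d1)).div (d0.pow 2) (pow_ne_zero 2 h0))).congr_deriv ?_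
  simp [W2]

theorem W_bounds (L : ℝ) (hL : 0 < L) (l : ℝ → ℂ)
    (hsm : ContDiff ℝ (⊤ : ℕ∞) l) (hper : ∀ s, l (s + L) = l s)
    (harc : ∀ s, ‖deriv l s‖ = 1) (hinj : Set.InjOn l (Set.Ico 0 L)) (R : ℝ) :
    ∃ B > 0, ∀ s t, |s| ≤ R → |t - s| ≤ 3*L/4 → |(W1 l s t).im| ≤ B ∧ |(W2 l s t).im| ≤ B := by
  have hc : ∀ k, Continuous (fun p : ℝ × ℝ => GG l k p.1 (p.1 + p.2)) := fun k =>
    (GG_cont l hsm k).comp (f := fun p : ℝ × ℝ => (p.1, p.1 + p.2)) (by fun_prop)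
  have c0 := hc 0
  have c1 := hc 1
  have c2 := hc 2
  have c3 := hc 3
  have hK : IsCompact (Set.Icc (-R) R ×ˢ Set.Icc (-(3*L/4)) (3*L/4)) :=
    isCompact_Icc.prod isCompact_Icc
  have hne : ∀ p ∈ Set.Icc (-R) R ×ˢ Set.Icc (-(3*L/4)) (3*L/4), GG l 0 p.1 (p.1 + p.2) ≠ 0 := by
    intro p hp
    apply GG_ne L hL l hsm hper harc hinj
    rw [add_sub_cancel_left]
    have := abs_le.2 hp.2
    linarith
  obtain ⟨B1, hB1⟩ := hK.exists_bound_of_continuousOn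
    (f := fun p : ℝ × ℝ => W1 l p.1 (p.1 + p.2)) (by
      apply ContinuousOn.div
      · exact Continuous.continuousOn (by fun_prop)
      · exact Continuous.continuousOn (by fun_prop)
      · exact fun p hp => pow_ne_zero _ (hne p hp))
  obtain ⟨B2, hB2⟩ := hK.exists_bound_of_continuousOn
    (f := fun p : ℝ × ℝ => W2 l p.1 (p.1 + p.2)) (by
      apply ContinuousOn.div
      · exact Continuous.continuousOn (by fun_prop)
      · exact Continuous.continuousOn (by fun_prop)
      · exact fun p hp => pow_ne_zero _ (pow_ne_zero _ (hne p hp)))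
  refine ⟨max 1 (max B1 B2), by positivity, fun s t hs ht => ?_⟩
  have hm : (s, t - s) ∈ Set.Icc (-R) R ×ˢ Set.Icc (-(3*L/4)) (3*L/4) := ⟨abs_le.1 hs, abs_le.1 ht⟩
  have e1 := hB1 _ hm
  have e2 := hB2 _ hm
  simp only [add_sub_cancel] at e1 e2
  exact ⟨(Complex.abs_im_le_norm _).trans (e1.trans (by simp)),
    (Complex.abs_im_le_norm _).trans (e2.trans (by simp))⟩

theorem cell_bound (L : ℝ) (hL : 0 < L) (l : ℝ → ℂ)
    (hsm : ContDiff ℝ (⊤ : ℕ∞) l) (hper : ∀ s, l (s + L) = l s)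
    (harc : ∀ s, ‖deriv l s‖ = 1) (hinj : Set.InjOn l (Set.Ico 0 L)) (R B : ℝ)
    (hB : ∀ s t, |s| ≤ R → |t - s| ≤ 3*L/4 → |(W1 l s t).im| ≤ B ∧ |(W2 l s t).im| ≤ B)
    (θ : ℝ → ℝ) (s a h m δ : ℝ) (hs : |s| ≤ R) (hh : 0 < h)
    (hm : m ∈ Set.Icc a (a+h)) (hδ : |m - (a+h/2)| ≤ δ)
    (hcell : ∀ t ∈ Set.Icc a (a+h), t ≠ s ∧ |t - s| ≤ 3*L/4)
    (hθ : ∀ t ∈ Set.Icc a (a+h), HasDerivAt θ (deriv l t / (l t - l s)).im t) :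
    h * (deriv l m / (l m - l s)).im ≤ θ (a+h) - θ a + (B * h^3 + B * h * δ) := by
  have hne : ∀ t ∈ Set.Icc a (a+h), GG l 0 s t ≠ 0 := fun t ht =>
    GG_ne L hL l hsm hper harc hinj s t (by linarith [(hcell t ht).2])
  have hk : ∀ t ∈ Set.Icc a (a+h), (GG l 1 s t / GG l 0 s t).im = (deriv l t / (l t - l s)).im :=
    fun t ht => kernel_eq l hsm s t (hcell t ht).1 (hne t ht)
  rw [← hk m hm]
  refine midpoint_bound θ (fun t => (GG l 1 s t / GG l 0 s t).im) (fun t => (W1 l s t).im)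
    (fun t => (W2 l s t).im) B a h m δ hh hm hδ ?_ ?_ ?_ ?_ ?_
  · intro t ht
    simp only [hk t ht]
    exact hθ t ht
  · exact fun t ht => W0_deriv l hsm s t (hne t ht)
  · exact fun t ht => W1_deriv l hsm s t (hne t ht)
  · exact fun t ht => (hB s t hs (hcell t ht).2).1
  · exact fun t ht => (hB s t hs (hcell t ht).2).2

noncomputable def ang (l : ℝ → ℂ) (s t : ℝ) : ℝ :=
  Complex.arg (-Complex.I * (l t - l s) / deriv l s)

theorem ang_pos (l : ℝ → ℂ) (hconv : ∀ s t : ℝ, l s ≠ l t → 0 < dotR (l s - l t) (normalv l s))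
    (harc : ∀ s, ‖deriv l s‖ = 1)
    (s t : ℝ) (h : l t ≠ l s) : 0 < (-Complex.I * (l t - l s) / deriv l s).re := by
  have h1 := hconv s t h.symm
  have h2 : Complex.normSq (deriv l s) = 1 := by rw [Complex.normSq_eq_norm_sq, harc]; norm_num
  rw [Complex.div_re, h2]
  simp [dotR, normalv] at h1 ⊢
  linarith

theorem ang_abs (l : ℝ → ℂ) (hconv : ∀ s t : ℝ, l s ≠ l t → 0 < dotR (l s - l t) (normalv l s))
    (harc : ∀ s, ‖deriv l s‖ = 1)
    (s t : ℝ) (h : l t ≠ l s) : |ang l s t| < π/2 :=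
  Complex.abs_arg_lt_pi_div_two_iff.2 (Or.inl (ang_pos l hconv harc s t h))

theorem ang_deriv (l : ℝ → ℂ) (hsm : ContDiff ℝ (⊤ : ℕ∞) l)
    (hconv : ∀ s t : ℝ, l s ≠ l t → 0 < dotR (l s - l t) (normalv l s))
    (harc : ∀ s, ‖deriv l s‖ = 1)
    (s t : ℝ) (h : l t ≠ l s) : HasDerivAt (ang l s) (deriv l t / (l t - l s)).im t := by
  have h3 : HasDerivAt (fun t => l t - l s) (deriv l t) t := by
    have := itd_deriv l hsm 0 t
    rw [iteratedDeriv_zero, zero_add, iteratedDeriv_one] at this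
    exact this.sub_const _
  have h4 := ((h3.const_mul (-Complex.I)).div_const (deriv l s)).clog_real
    (Or.inl (ang_pos l hconv harc s t h))
  have h5 := im_deriv h4
  simp only [Complex.log_im] at h5
  have hd : deriv l s ≠ 0 := by
    intro h0
    have := harc s
    rw [h0] at this
    simp at this
  refine HasDerivAt.congr_deriv (f' := _) h5 ?_
  congr 1
  have := sub_ne_zero.2 h
  field_simp

theorem deriv_per (L : ℝ) (l : ℝ → ℂ) (hper : ∀ s, l (s + L) = l s) (s : ℝ) :
    deriv l (s + L) = deriv l s := by
  rw [← deriv_comp_add_const]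
  simp only [hper]

theorem full_cell (L : ℝ) (hL : 0 < L) (l : ℝ → ℂ)
    (hsm : ContDiff ℝ (⊤ : ℕ∞) l) (hper : ∀ s, l (s + L) = l s)
    (harc : ∀ s, ‖deriv l s‖ = 1) (hinj : Set.InjOn l (Set.Ico 0 L))
    (hconv : ∀ s t : ℝ, l s ≠ l t → 0 < dotR (l s - l t) (normalv l s)) (R B : ℝ)
    (hB : ∀ s t, |s| ≤ R → |t - s| ≤ 3*L/4 → |(W1 l s t).im| ≤ B ∧ |(W2 l s t).im| ≤ B)
    (s a h m δ : ℝ) (hs : |s| ≤ R) (hs' : |s + L| ≤ R) (hh : 0 < h) (hhL : h ≤ L/8)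
    (hm : m ∈ Set.Icc a (a+h)) (hδ : |m - (a+h/2)| ≤ δ)
    (ha : s < a) (hb : a + h < s + L) :
    h * (deriv l m / (l m - l s)).im ≤ ang l s (a+h) - ang l s a + (B * h^3 + B * h * δ) := by
  have hne : ∀ t ∈ Set.Icc a (a+h), l t ≠ l s := by
    intro t ht he
    have := inj_lt L hL l hper hinj s t he.symm
      (abs_lt.2 ⟨by linarith [ht.1], by linarith [ht.2]⟩)
    linarith [ht.1]
  have hθ := fun t (ht : t ∈ Set.Icc a (a+h)) => ang_deriv l hsm hconv harc s t (hne t ht)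
  rcases le_total a (s + L/2) with h1 | h1
  · refine cell_bound L hL l hsm hper harc hinj R B hB (ang l s) s a h m δ hs hh hm hδ ?_ hθ
    intro t ht
    exact ⟨by linarith [ht.1], abs_le.2 ⟨by linarith [ht.1], by linarith [ht.2]⟩⟩
  · have := cell_bound L hL l hsm hper harc hinj R B hB (ang l s) (s+L) a h m δ hs' hh hm hδ ?_ ?_
    · rwa [hper] at this
    · intro t ht
      exact ⟨by linarith [ht.2], abs_le.2 ⟨by linarith [ht.1], by linarith [ht.2]⟩⟩
    · rw [hper]
      exact hθ

theorem curv_bound (l : ℝ → ℂ) (hsm : ContDiff ℝ (⊤ : ℕ∞) l)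
    (hcurv : ∀ s : ℝ, dotR (deriv (deriv l) s) (normalv l s) < 0) (R : ℝ) (hR : 0 ≤ R) :
    ∃ c > 0, ∀ s, |s| ≤ R → c ≤ -(1/2) * dotR (deriv (deriv l) s) (normalv l s) := by
  have h1 : Continuous (deriv l) := by
    have := itd_cont l hsm 1
    rwa [iteratedDeriv_one] at this
  have h2 : Continuous (deriv (deriv l)) := by
    have := itd_cont l hsm 2
    rwa [iteratedDeriv_succ, iteratedDeriv_one] at this
  have hc : Continuous (fun s => -(1/2) * dotR (deriv (deriv l) s) (normalv l s)) := by
    unfold dotR normalv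
    fun_prop
  obtain ⟨x, hx, hmin⟩ := (isCompact_Icc (a := -R) (b := R)).exists_isMinOn
    ⟨0, by simpa using hR⟩ hc.continuousOn
  exact ⟨_, by linarith [hcurv x], fun s hs => hmin (abs_le.1 hs)⟩

theorem diag_bound (L : ℝ) (hL : 0 < L) (l : ℝ → ℂ)
    (hsm : ContDiff ℝ (⊤ : ℕ∞) l) (hper : ∀ s, l (s + L) = l s)
    (harc : ∀ s, ‖deriv l s‖ = 1) (hinj : Set.InjOn l (Set.Ico 0 L)) (R B c : ℝ)
    (hB : ∀ s t, |s| ≤ R → |t - s| ≤ 3*L/4 → |(W1 l s t).im| ≤ B ∧ |(W2 l s t).im| ≤ B)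
    (hc : ∀ s, |s| ≤ R → c ≤ -(1/2) * dotR (deriv (deriv l) s) (normalv l s))
    (s t : ℝ) (hs : |s| ≤ R) (hts : |t - s| ≤ 3*L/4) (hne : l t ≠ l s) :
    c - B * |t - s| ≤ (deriv l t / (l t - l s)).im := by
  have hg : ∀ x ∈ Metric.closedBall s (3*L/4), GG l 0 s x ≠ 0 := by
    intro x hx
    rw [Metric.mem_closedBall, Real.dist_eq] at hx
    exact GG_ne L hL l hsm hper harc hinj s x (by linarith)
  have ht : t ∈ Metric.closedBall s (3*L/4) := by
    rwa [Metric.mem_closedBall, Real.dist_eq]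
  have hss : s ∈ Metric.closedBall s (3*L/4) := Metric.mem_closedBall_self (by linarith)
  have cv : Convex ℝ (Metric.closedBall s (3*L/4)) := convex_closedBall _ _
  have key : |(GG l 1 s t / GG l 0 s t).im - (GG l 1 s s / GG l 0 s s).im| ≤ B * |t - s| := by
    refine cv.norm_image_sub_le_of_norm_hasDerivWithin_le
      (f := fun x => (GG l 1 s x / GG l 0 s x).im) (f' := fun x => (W1 l s x).im)
      (fun x hx => (W0_deriv l hsm s x (hg x hx)).hasDerivWithinAt) (fun x hx => ?_) hss ht
    rw [Metric.mem_closedBall, Real.dist_eq] at hx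
    exact (hB s x hs hx).1
  have hd : (GG l 1 s s / GG l 0 s s).im = -(1/2) * dotR (deriv (deriv l) s) (normalv l s) := by
    have h2 : Complex.normSq (deriv l s) = 1 := by rw [Complex.normSq_eq_norm_sq, harc]; norm_num
    rw [GG_diag0, GG_diag1, Complex.div_im, h2]
    simp [dotR, normalv]
    ring
  have hts' : t ≠ s := fun h => hne (by rw [h])
  rw [← kernel_eq l hsm s t hts' (hg t ht)]
  have := (abs_le.1 key).1
  have := hc s hs
  linarith

theorem telescope (ang : ℝ → ℝ) (N : ℕ) (j : Fin N) (h L : ℝ) (hN : (N:ℝ) * h = L)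
    (F : Fin N → ℝ) (e : ℝ) (he : 0 ≤ e)
    (h1 : ∀ i : Fin N, j < i → F i ≤ ang (((i:ℕ):ℝ)*h - h/2 + h) - ang (((i:ℕ):ℝ)*h - h/2) + e)
    (h2 : ∀ i : Fin N, i < j →
      F i ≤ ang (((i:ℕ):ℝ)*h - h/2 + L + h) - ang (((i:ℕ):ℝ)*h - h/2 + L) + e) :
    ∑ i ∈ Finset.univ.erase j, F i
      ≤ ang (((j:ℕ):ℝ)*h - h/2 + L) - ang (((j:ℕ):ℝ)*h + h/2) + N * e := by
  let P : ℕ → ℝ := fun k => if k ≤ (j:ℕ) then ang ((k:ℝ)*h - h/2 + L) else ang ((k:ℝ)*h - h/2)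
  have hF : ∀ i ∈ Finset.univ.erase j, F i ≤ (P ((i:ℕ)+1) - P (i:ℕ)) + e := by
    intro i hi
    have hij := Finset.ne_of_mem_erase hi
    rcases lt_or_gt_of_ne hij with hlt | hlt
    · have a1 : (i:ℕ) < (j:ℕ) := hlt
      have := h2 i hlt
      simp only [P]
      rw [if_pos (by omega), if_pos (by omega)]
      convert this using 4
      push_cast
      ring
    · have a1 : (j:ℕ) < (i:ℕ) := hlt
      have := h1 i hlt
      simp only [P]
      rw [if_neg (by omega), if_neg (by omega)]
      convert this using 4
      push_cast
      ring
  have hsum : ∑ i : Fin N, (P ((i:ℕ)+1) - P (i:ℕ)) = 0 := by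
    rw [Fin.sum_univ_eq_sum_range (fun k => P (k+1) - P k) N, Finset.sum_range_sub]
    simp only [P]
    rw [if_neg (by have := j.2; omega), if_pos (by omega), hN]
    rw [sub_eq_zero]
    congr 1
    push_cast
    ring
  have hers : ∑ i ∈ Finset.univ.erase j, (P ((i:ℕ)+1) - P (i:ℕ)) = P (j:ℕ) - P ((j:ℕ)+1) := by
    have := Finset.sum_erase_add Finset.univ (fun i : Fin N => P ((i:ℕ)+1) - P (i:ℕ))
      (Finset.mem_univ j)
    rw [hsum] at this
    linarith
  have hcard : ((Finset.univ.erase j).card : ℝ) ≤ N := by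
    have := Finset.card_le_univ (Finset.univ.erase j)
    rw [Fintype.card_fin] at this
    exact_mod_cast this
  calc ∑ i ∈ Finset.univ.erase j, F i
      ≤ ∑ i ∈ Finset.univ.erase j, ((P ((i:ℕ)+1) - P (i:ℕ)) + e) := Finset.sum_le_sum hF
    _ = (P (j:ℕ) - P ((j:ℕ)+1)) + (Finset.univ.erase j).card * e := by
        rw [Finset.sum_add_distrib, hers, Finset.sum_const, nsmul_eq_mul]
    _ ≤ (P (j:ℕ) - P ((j:ℕ)+1)) + N * e := by gcongr
    _ = _ := by
        simp only [P]
        rw [if_pos (le_refl _), if_neg (by omega)]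
        congr 3
        push_cast
        ring

/-- For a strictly convex obstacle, the fluid charge matrix `(L/N)A_N + πI` is
strictly diagonally dominant with respect to columns for all large `N`. -/
theorem fluid_charge_diagonally_dominant
    (L : ℝ) (hL : 0 < L) (l : ℝ → ℂ)
    (hsm : ContDiff ℝ (⊤ : ℕ∞) l) (hper : ∀ s, l (s + L) = l s)
    (harc : ∀ s, ‖deriv l s‖ = 1) (hinj : Set.InjOn l (Set.Ico 0 L))
    (horient : ∃ z₀ : ℂ, (∀ s, l s ≠ z₀) ∧
      (∫ t in (0:ℝ)..L, deriv l t / (l t - z₀)) = 2 * (π : ℂ) * Complex.I)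
    (hconv : ∀ s t : ℝ, l s ≠ l t → 0 < dotR (l s - l t) (normalv l s))
    (hcurv : ∀ s : ℝ, dotR (deriv (deriv l) s) (normalv l s) < 0)
    (κ : ℕ) (hκ : 2 ≤ κ) (M : ℝ) (hM : 0 < M)
    (ms mst : (N : ℕ) → Fin N → ℝ)
    (hms : ∀ N, 2 ≤ N → ∀ i : Fin N,
      |ms N i - ((i : ℕ) : ℝ) * L / (N : ℝ)| ≤ M / (N : ℝ) ^ κ)
    (hmst : ∀ N, 2 ≤ N → ∀ i : Fin N,
      |mst N i - ((i : ℕ) : ℝ) * L / (N : ℝ)| ≤ M / (N : ℝ) ^ κ) :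
    ∃ N₀ : ℕ, ∀ N : ℕ, N₀ ≤ N → ∀ j : Fin N,
      ∑ i ∈ Finset.univ.erase j,
          |((L / (N : ℝ)) • AmatE l (mst N) (ms N)
            + π • (1 : Matrix (Fin N) (Fin N) ℝ)) i j|
        < |((L / (N : ℝ)) • AmatE l (mst N) (ms N)
            + π • (1 : Matrix (Fin N) (Fin N) ℝ)) j j| := by
  obtain ⟨B, hBpos, hB⟩ := W_bounds L hL l hsm hper harc hinj (2*L+M)
  obtain ⟨c, hcpos, hc⟩ := curv_bound l hsm hcurv (2*L+M) (by positivity)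
  have hlim : ∀ C ε : ℝ, 0 < ε → ∀ᶠ N : ℕ in Filter.atTop, C * (L / (N:ℝ)) < ε := by
    intro C ε hε
    have : Filter.Tendsto (fun N : ℕ => C * (L / (N:ℝ))) Filter.atTop (nhds (C * 0)) :=
      (tendsto_const_div_atTop_nhds_zero_nat L).const_mul C
    rw [mul_zero] at this
    exact this.eventually_lt_const hε
  have hev := ((hlim 1 (L/8) (by positivity)).and (hlim 1 1 one_pos)).and
    (((hlim (M/L^2) (1/8) (by norm_num)).and (hlim (L*B*(1+M/L^2)) (c/2) (by positivity))).and
    ((hlim (2*B*(M/L^2)) (c/2) (by positivity)).and (Filter.eventually_ge_atTop 2)))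
  obtain ⟨N₀, hN₀⟩ := Filter.eventually_atTop.1 hev
  refine ⟨N₀, fun N hN j => ?_⟩
  obtain ⟨⟨g1, g2⟩, ⟨g3, g4⟩, g5, hN2⟩ := hN₀ N hN
  have hNpos : (0:ℝ) < N := by
    have : 0 < N := by omega
    exact_mod_cast this
  set h := L / (N:ℝ) with hh
  have hpos : 0 < h := by positivity
  have hNh : (N:ℝ) * h = L := by rw [hh]; field_simp
  set Q := M / L^2 with hQ
  have hQpos : 0 < Q := by positivity
  set D := M / (N:ℝ)^κ with hD
  have hDQ : D ≤ Q * h^2 := by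
    have e1 : Q * h^2 = M / (N:ℝ)^2 := by rw [hQ, hh]; field_simp
    rw [e1, hD]
    have : (1:ℝ) ≤ N := by exact_mod_cast (by omega : 1 ≤ N)
    gcongr
  have hDh : D ≤ h/8 := by nlinarith
  have hD0 : 0 ≤ D := by positivity
  have hDM : D ≤ M := by
    rw [hD]
    apply div_le_self hM.le
    exact one_le_pow₀ (by exact_mod_cast (by omega : 1 ≤ N))
  have hs := fun i => abs_le.1 (hms N hN2 i)
  have ht := fun i => abs_le.1 (hmst N hN2 i)
  have hmul : ∀ i : Fin N, ((i:ℕ):ℝ) * L / N = ((i:ℕ):ℝ) * h := fun i => by rw [hh]; ring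
  simp only [hmul] at hs ht
  have hi0 : ∀ i : Fin N, 0 ≤ ((i:ℕ):ℝ) * h := fun i => by positivity
  have hord : ∀ i k : Fin N, i < k → ((i:ℕ):ℝ) * h + h ≤ ((k:ℕ):ℝ) * h := by
    intro i k hik
    have h1 : (i:ℕ) + 1 ≤ (k:ℕ) := hik
    have h2 : ((i:ℕ):ℝ) + 1 ≤ ((k:ℕ):ℝ) := by exact_mod_cast h1
    nlinarith
  have hi1 : ∀ i : Fin N, ((i:ℕ):ℝ) * h + h ≤ L := by
    intro i
    have h1 : (i:ℕ) + 1 ≤ N := i.2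
    have h2 : ((i:ℕ):ℝ) + 1 ≤ (N:ℝ) := by exact_mod_cast h1
    nlinarith
  set s := ms N j with hsdef
  have hsj := hs j
  have hj0 := hi0 j
  have hj1 := hi1 j
  have hsR : |s| ≤ 2*L+M := abs_le.2 ⟨by linarith, by linarith⟩
  have hsR' : |s + L| ≤ 2*L+M := abs_le.2 ⟨by linarith, by linarith⟩
  have hlne : ∀ t, s < t → t < s + L → l t ≠ l s := by
    intro t h1 h2 he
    have := inj_lt L hL l hper hinj s t he.symm (abs_lt.2 ⟨by linarith, by linarith⟩)
    linarith
  -- off-diagonal nodes are away from the singularity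
  have hoff : ∀ i : Fin N, i ≠ j → l (mst N i) ≠ l s := by
    intro i hij
    have hti := ht i
    rcases lt_or_gt_of_ne hij with hlt | hlt
    · rw [← hper]
      have := hord i j hlt
      have := hi0 i
      exact hlne _ (by linarith) (by linarith)
    · have := hord j i hlt
      have := hi1 i
      exact hlne _ (by linarith) (by linarith)
  have hA : ∀ i : Fin N, l (mst N i) ≠ l s → AmatE l (mst N) (ms N) i j
      = (deriv l (mst N i) / (l (mst N i) - l s)).im := by
    intro i hne
    simp only [AmatE, Matrix.of_apply]
    rw [if_neg hne, normalv, dot_kernel]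
  have hApos : ∀ i : Fin N, i ≠ j → 0 < AmatE l (mst N) (ms N) i j := by
    intro i hij
    have hne := hoff i hij
    simp only [AmatE, Matrix.of_apply]
    rw [if_neg hne]
    have := hconv _ _ hne
    have : 0 < ‖l (mst N i) - l s‖ := norm_pos_iff.2 (sub_ne_zero.2 hne)
    positivity
  have hdiag : c - B * (2*D) ≤ AmatE l (mst N) (ms N) j j := by
    have htj := ht j
    by_cases he : l (mst N j) = l s
    · simp only [AmatE, Matrix.of_apply]
      rw [if_pos he]
      have h1 := hc (mst N j) (abs_le.2 ⟨by linarith, by linarith⟩)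
      have : 0 ≤ B * (2*D) := by positivity
      linarith
    · rw [hA j he]
      have h2 : |mst N j - s| ≤ 2*D := abs_le.2 ⟨by linarith, by linarith⟩
      have h1 := diag_bound L hL l hsm hper harc hinj (2*L+M) B c hB hc s (mst N j) hsR
        (by linarith) he
      have := mul_le_mul_of_nonneg_left h2 hBpos.le
      linarith
  have hmain := telescope (ang l s) N j h L hNh
    (fun i => h * AmatE l (mst N) (ms N) i j) (B*h^3 + B*h*D) (by positivity) ?_ ?_
  · have hang1 := (abs_lt.1 (ang_abs l hconv harc s (((j:ℕ):ℝ)*h - h/2 + L)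
      (hlne _ (by linarith) (by linarith)))).2
    have hang2 := (abs_lt.1 (ang_abs l hconv harc s (((j:ℕ):ℝ)*h + h/2)
      (hlne _ (by linarith) (by linarith)))).1
    have hlhs : ∑ i ∈ Finset.univ.erase j,
          |(h • AmatE l (mst N) (ms N) + π • (1 : Matrix (Fin N) (Fin N) ℝ)) i j|
        = ∑ i ∈ Finset.univ.erase j, h * AmatE l (mst N) (ms N) i j := by
      refine Finset.sum_congr rfl fun i hi => ?_
      have hij := Finset.ne_of_mem_erase hi
      rw [Matrix.add_apply, Matrix.smul_apply, Matrix.smul_apply, Matrix.one_apply_ne hij]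
      rw [smul_zero, add_zero, smul_eq_mul, abs_of_pos (mul_pos hpos (hApos i hij))]
    rw [hlhs]
    have hrhs : (h • AmatE l (mst N) (ms N) + π • (1 : Matrix (Fin N) (Fin N) ℝ)) j j
        = h * AmatE l (mst N) (ms N) j j + π := by
      rw [Matrix.add_apply, Matrix.smul_apply, Matrix.smul_apply, Matrix.one_apply_eq]
      simp
    rw [hrhs]
    refine lt_of_lt_of_le ?_ (le_abs_self _)
    have k1 : N * (B*h^3 + B*h*D) ≤ h * (c/2) := by
      have : N * (B*h^3 + B*h*D) = L * B * (h^2 + D) := by rw [← hNh]; ring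
      rw [this]
      have h3 : L * B * (h^2 + D) ≤ L * B * (h^2 + Q*h^2) := by gcongr
      have h4 : L * B * (h^2 + Q*h^2) = h * (L*B*(1+Q)*h) := by ring
      have h5 : h * (L*B*(1+Q)*h) ≤ h * (c/2) := by gcongr
      linarith
    have k2 : B * (2*D) ≤ c/2 := by
      have h3 : B * (2*D) ≤ B * (2*(Q*h^2)) := by gcongr
      have h4 : B * (2*(Q*h^2)) = (2*B*Q*h)*h := by ring
      have h5 : (2*B*Q*h)*h ≤ (2*B*Q*h)*1 := by
        apply mul_le_mul_of_nonneg_left _ (by positivity)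
        linarith
      linarith
    have k3 : h * (c/2) ≤ h * AmatE l (mst N) (ms N) j j := by
      apply mul_le_mul_of_nonneg_left _ hpos.le
      linarith
    linarith
  · intro i hij
    have hti := ht i
    have := hord j i hij
    have := hi1 i
    simp only [hA i (hoff i hij.ne')]
    refine full_cell L hL l hsm hper harc hinj hconv (2*L+M) B hB s _ h (mst N i) D hsR hsR' hpos
      (by linarith) ⟨by linarith, by linarith⟩ (abs_le.2 ⟨by linarith, by linarith⟩)
      (by linarith) (by linarith)
  · intro i hij
    have hti := ht i
    have := hord i j hij
    have := hi0 i
    simp only [hA i (hoff i hij.ne)]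
    rw [← hper (mst N i), ← deriv_per L l hper (mst N i)]
    refine full_cell L hL l hsm hper harc hinj hconv (2*L+M) B hB s _ h (mst N i + L) D hsR hsR' hpos
      (by linarith) ⟨by linarith, by linarith⟩ (abs_le.2 ⟨by linarith, by linarith⟩)
      (by linarith) (by linarith)
end

section
/- Assume the curve setup with counterclockwise orientation. Define the kernel K_A(s,t) = ((l(s) − l(t))·n(s))/‖l(s) − l(t)‖² when l(s) ≠ l(t), and K_A(s,t) = −(1/2)·l''(s)·n(s) when l(s) = l(t) (this extension makes K_A continuous). Suppose φ : ℝ → ℂ is continuous, L-periodic and not identically zero, λ ∈ ℂ, and ∫₀^L K_A(s,t)·φ(t) dt = λ·φ(s) for all s ∈ ℝ. Then λ is real and −π < λ ≤ π. -/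
open Real MeasureTheory

open Classical in
/-- The double layer kernel `K_A(s,t) = ((l(s) - l(t))·n(s))/‖l(s) - l(t)‖²`, extended
continuously through the diagonal by `-(1/2)·l''(s)·n(s)`. -/
noncomputable def KA (l : ℝ → ℂ) (s t : ℝ) : ℝ :=
  if l s = l t then -(1/2) * dotR (deriv (deriv l) s) (normalv l s)
  else dotR (l s - l t) (normalv l s) / ‖l s - l t‖ ^ 2

section DoubleLayer

open Real MeasureTheory Set Filter Topology
open scoped ENNReal

/-- A smooth simple closed curve of length `L`, parametrized by arc length. -/
structure Crv (L : ℝ) (l : ℝ → ℂ) : Prop where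
  hL : 0 < L
  hsm : ContDiff ℝ (⊤ : ℕ∞) l
  hper : ∀ s, l (s + L) = l s
  harc : ∀ s, ‖deriv l s‖ = 1
  hinj : Set.InjOn l (Set.Ico 0 L)

namespace Crv
variable {L : ℝ} {l : ℝ → ℂ}

lemma hd (h : Crv L l) (s : ℝ) : HasDerivAt l (deriv l s) s :=
  ((h.hsm.differentiable (by simp)) s).hasDerivAt

lemma cont (h : Crv L l) : Continuous l := h.hsm.continuous

lemma dsm (h : Crv L l) : ContDiff ℝ (⊤ : ℕ∞) (deriv l) :=
  (contDiff_infty_iff_deriv.1 h.hsm).2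

lemma dcont (h : Crv L l) : Continuous (deriv l) := h.dsm.continuous

lemma ddcont (h : Crv L l) : Continuous (deriv (deriv l)) :=
  (contDiff_infty_iff_deriv.1 h.dsm).2.continuous

lemma hdd (h : Crv L l) (s : ℝ) : HasDerivAt (deriv l) (deriv (deriv l) s) s :=
  ((h.dsm.differentiable (by simp)) s).hasDerivAt

lemma deriv_periodic {g : ℝ → ℂ} (hg : ∀ s, g (s + L) = g s) (s : ℝ) :
    deriv g (s + L) = deriv g s := by
  have : (fun x => g (x + L)) = g := funext hg
  rw [← deriv_comp_add_const, this]

lemma dper (h : Crv L l) (s : ℝ) : deriv l (s + L) = deriv l s := deriv_periodic h.hper s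

lemma dne (h : Crv L l) (s : ℝ) : deriv l s ≠ 0 := by
  intro h0; have := h.harc s; simp [h0] at this

/-- a continuous periodic function is bounded -/
lemma bdd_of_periodic (hL : 0 < L) {g : ℝ → ℂ} (hc : Continuous g) (hg : ∀ s, g (s + L) = g s) :
    ∃ M > 0, ∀ s, ‖g s‖ ≤ M := by
  obtain ⟨C, hC⟩ := (isCompact_Icc (a := (0:ℝ)) (b := L)).exists_bound_of_continuousOn hc.continuousOn
  refine ⟨max C 1, by positivity, fun s => ?_⟩
  obtain ⟨y, hy, hy2⟩ := Function.Periodic.exists_mem_Ico₀ (f := g) (c := L) hg hL s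
  rw [hy2]
  exact (hC y ⟨hy.1, hy.2.le⟩).trans (le_max_left _ _)

lemma lip (h : Crv L l) : ∃ M > 0, (∀ s t, ‖deriv l t - deriv l s‖ ≤ M * |t - s|) ∧
    (∀ s t, ‖l t - l s - (t - s) * deriv l s‖ ≤ M * |t - s| ^ 2) := by
  obtain ⟨M, hM, hb⟩ := bdd_of_periodic h.hL h.ddcont (deriv_periodic h.dper)
  have h1 : ∀ s t, ‖deriv l t - deriv l s‖ ≤ M * |t - s| := by
    intro s t
    have := Convex.norm_image_sub_le_of_norm_hasDerivWithin_le (s := univ) (f := deriv l)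
      (f' := deriv (deriv l)) (C := M) (x := s) (y := t)
      (fun x _ => (h.hdd x).hasDerivWithinAt) (fun x _ => hb x) convex_univ trivial trivial
    simpa using this
  refine ⟨M, hM, h1, fun s t => ?_⟩
  have := Convex.norm_image_sub_le_of_norm_hasDerivWithin_le (s := uIcc s t)
      (f := fun x => l x - x * deriv l s)
      (f' := fun x => deriv l x - deriv l s) (C := M * |t - s|) (x := s) (y := t)
      (fun x _ => ?_) (fun x hx => ?_) (convex_uIcc _ _) left_mem_uIcc right_mem_uIcc
  · have e : l t - l s - (t - s) * deriv l s
      = (l t - t * deriv l s) - (l s - s * deriv l s) := by ring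
    rw [e]; refine this.trans ?_
    rw [Real.norm_eq_abs]; apply le_of_eq; ring
  · have h2 : HasDerivAt (fun x : ℝ => (x : ℂ)) 1 x := Complex.ofRealCLM.hasDerivAt
    have h3 := ((h.hd x).sub (h2.mul_const (deriv l s))).hasDerivWithinAt (s := uIcc s t)
    rw [one_mul] at h3
    exact h3
  · refine (h1 s x).trans ?_
    have := abs_sub_left_of_mem_uIcc hx
    gcongr

lemma eq_imp (h : Crv L l) {s x : ℝ} (hx : 0 < x) (hxL : x < L) : l (s + x) ≠ l s := by
  intro he
  have hp : Function.Periodic l L := h.hper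
  obtain ⟨n, hn, -⟩ := existsUnique_add_zsmul_mem_Ico h.hL s 0
  simp only [zero_add, zsmul_eq_mul] at hn
  set y := s + n * L with hy
  have e1 : l y = l s := by rw [hy]; exact hp.int_mul n s
  have e2 : l (y + x) = l (s + x) := by
    rw [hy, show s + n * L + x = (s + x) + n * L by ring]; exact hp.int_mul n _
  by_cases hlt : y + x < L
  · have := h.hinj ⟨by linarith [hn.1], hlt⟩ hn (by rw [e1, e2, he])
    linarith
  · have e3 : l (y + x - L) = l (y + x) := by rw [← h.hper (y + x - L)]; congr 1; ring
    have := h.hinj (x₁ := y + x - L) (x₂ := y) ⟨by linarith, by linarith [hn.2]⟩ hn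
      (by rw [e1, e3, e2, he])
    linarith

lemma near (h : Crv L l) : ∃ δ > 0, ∀ s x ε : ℝ, |x| ≤ δ →
    ‖(x:ℂ) + Complex.I * ε‖ / 2 ≤ ‖l (s + x) - l s + Complex.I * ε * deriv l s‖ := by
  obtain ⟨M, hM, -, h2⟩ := h.lip
  refine ⟨1 / (2 * M), by positivity, fun s x ε hx => ?_⟩
  have := h2 s (s + x)
  simp only [add_sub_cancel_left] at this
  have e : l (s + x) - l s + Complex.I * ε * deriv l s =
    ((x:ℂ) + Complex.I * ε) * deriv l s - -(l (s+x) - l s - (↑(s+x) - s) * deriv l s) := by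
      push_cast; ring
  rw [e]
  have h3 := norm_sub_norm_le (((x:ℂ) + Complex.I * ε) * deriv l s)
    (-(l (s+x) - l s - (↑(s+x) - s) * deriv l s))
  rw [norm_mul, h.harc, mul_one, norm_neg] at h3
  have h4 : |x| ≤ ‖(x:ℂ) + Complex.I * ε‖ := by
    have := Complex.abs_re_le_norm ((x:ℂ) + Complex.I * ε)
    simpa using this
  have h5 : M * |x| ^ 2 ≤ |x| / 2 := by
    have : M * |x| ≤ 1 / 2 := by
      calc M * |x| ≤ M * (1 / (2 * M)) := by gcongr
        _ = 1 / 2 := by field_simp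
    nlinarith [abs_nonneg x]
  linarith

lemma far (h : Crv L l) {δ : ℝ} (hδ : 0 < δ) : ∃ m > 0, ∀ s x : ℝ, δ ≤ |x| → |x| ≤ L / 2 →
    m ≤ ‖l (s + x) - l s‖ := by
  have hL := h.hL
  set K : Set (ℝ × ℝ) := Icc 0 L ×ˢ {x | δ ≤ |x| ∧ |x| ≤ L / 2} with hK
  have hKc : IsCompact K := by
    apply isCompact_Icc.prod
    apply (isCompact_Icc (a := -(L/2)) (b := L/2)).of_isClosed_subset
    · exact (isClosed_le continuous_const continuous_abs).inter
        (isClosed_le continuous_abs continuous_const)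
    · intro x hx; exact abs_le.1 hx.2
  have hl := h.cont
  have hcont : ContinuousOn (fun p : ℝ × ℝ => ‖l (p.1 + p.2) - l p.1‖) K := by
    apply Continuous.continuousOn; fun_prop
  have hpos : ∀ p ∈ K, 0 < ‖l (p.1 + p.2) - l p.1‖ := by
    rintro ⟨s, x⟩ ⟨-, hx1, hx2⟩
    dsimp only at hx1 hx2 ⊢
    rw [norm_pos_iff, sub_ne_zero]
    rcases le_or_gt 0 x with h0 | h0
    · rw [abs_of_nonneg h0] at hx1 hx2
      exact h.eq_imp (by linarith) (by linarith)
    · rw [abs_of_neg h0] at hx1 hx2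
      have := h.eq_imp (s := s + x) (x := -x) (by linarith) (by linarith)
      simpa using this.symm
  obtain ⟨m, hm, hm2⟩ := hKc.exists_forall_le' hcont hpos
  refine ⟨m, hm, fun s x h1 h2 => ?_⟩
  have hp : Function.Periodic (fun s => ‖l (s + x) - l s‖) L := fun s => by
    simp only [h.hper s]; rw [show s + L + x = s + x + L by ring, h.hper]
  obtain ⟨y, hy, hy2⟩ := hp.exists_mem_Ico₀ hL s
  refine le_trans ?_ hy2.ge
  exact hm2 (y, x) ⟨⟨hy.1, hy.2.le⟩, h1, h2⟩

/-- chord-arc estimate, uniform along parallel curves -/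
lemma chord (h : Crv L l) : ∃ c > 0, ∃ ε₀ > 0, ∀ s x ε : ℝ, |x| ≤ L / 2 → |ε| ≤ ε₀ →
    c * ‖(x:ℂ) + Complex.I * ε‖ ≤ ‖l (s + x) - l s + Complex.I * ε * deriv l s‖ := by
  obtain ⟨δ, hδ, hn⟩ := h.near
  obtain ⟨m, hm, hf⟩ := h.far hδ
  have hL := h.hL
  have hq : 0 < L / 2 + m / 2 := by linarith
  refine ⟨min (1/2) ((m / 2) / (L / 2 + m / 2)), by positivity, m / 2, by linarith,
    fun s x ε hx hε => ?_⟩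
  rcases le_total |x| δ with h1 | h1
  · have := hn s x ε h1
    have h3 : min (1/2) ((m / 2) / (L / 2 + m / 2)) ≤ 1/2 := min_le_left _ _
    nlinarith [norm_nonneg ((x:ℂ) + Complex.I * ε)]
  · have := hf s x h1 hx
    have h3 : min (1/2) ((m / 2) / (L / 2 + m / 2)) ≤ (m / 2) / (L / 2 + m / 2) := min_le_right _ _
    have h4 : ‖(x:ℂ) + Complex.I * ε‖ ≤ L / 2 + m / 2 := by
      refine (norm_add_le _ _).trans ?_
      simp only [norm_mul, Complex.norm_I, Complex.norm_real, Real.norm_eq_abs, one_mul]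
      linarith
    have h5 : m / 2 ≤ ‖l (s + x) - l s + Complex.I * ε * deriv l s‖ := by
      have h6 := norm_sub_le_norm_add (l (s + x) - l s) (Complex.I * ε * deriv l s)
      simp only [norm_mul, Complex.norm_I, Complex.norm_real, Real.norm_eq_abs, one_mul, h.harc,
        mul_one] at h6
      linarith
    calc _ ≤ (m / 2) / (L / 2 + m / 2) * (L / 2 + m / 2) := by gcongr
      _ = m / 2 := by field_simp
      _ ≤ _ := h5

end Crv

/-- (unnormalized) winding integral -/
noncomputable def wnd (L : ℝ) (l : ℝ → ℂ) (z : ℂ) : ℂ := ∫ t in (0:ℝ)..L, deriv l t / (l t - z)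

/-- parallel curve -/
noncomputable def par (l : ℝ → ℂ) (s ε : ℝ) : ℂ := l s - Complex.I * ε * deriv l s

/-- difference kernel -/
noncomputable def Dk (l : ℝ → ℂ) (s ε x : ℝ) : ℂ :=
  deriv l (s + x) / (l (s + x) - l s + Complex.I * ε * deriv l s) - 1 / ((x:ℂ) + Complex.I * ε)

namespace Crv
variable {L : ℝ} {l : ℝ → ℂ}

lemma wnd_int (h : Crv L l) {z : ℂ} (hz : ∀ t, l t ≠ z) :
    ∃ n : ℤ, wnd L l z = 2 * π * Complex.I * n := by
  have hl := h.cont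
  have hl' := h.dcont
  have hc : Continuous (fun t => deriv l t / (l t - z)) := by
    apply hl'.div (by fun_prop); intro t; exact sub_ne_zero.2 (hz t)
  set I : ℝ → ℂ := fun x => ∫ t in (0:ℝ)..x, deriv l t / (l t - z) with hI
  have hdI : ∀ x, HasDerivAt I (deriv l x / (l x - z)) x := fun x =>
    intervalIntegral.integral_hasDerivAt_right (hc.intervalIntegrable _ _)
      (hc.stronglyMeasurableAtFilter _ _) hc.continuousAt
  set E : ℝ → ℂ := fun x => Complex.exp (-I x) * (l x - z) with hE
  have hdE : ∀ x, HasDerivAt E 0 x := by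
    intro x
    have h1 := ((hdI x).neg.cexp).mul ((h.hd x).sub_const z)
    convert! h1 using 1
    have := sub_ne_zero.2 (hz x)
    field_simp; simp
  have hconst : E L = E 0 := is_const_of_deriv_eq_zero (fun x => (hdE x).differentiableAt)
    (fun x => (hdE x).deriv) L 0
  have h0 : l L = l 0 := by simpa using h.hper 0
  simp only [hE, h0] at hconst
  have h1 := mul_right_cancel₀ (sub_ne_zero.2 (hz 0)) hconst
  simp only [hI, intervalIntegral.integral_same, neg_zero, Complex.exp_zero] at h1
  obtain ⟨n, hn⟩ := Complex.exp_eq_one_iff.1 h1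
  refine ⟨-n, ?_⟩
  have : wnd L l z = - -wnd L l z := by ring
  rw [this]
  change - (-∫ t in (0:ℝ)..L, deriv l t / (l t - z)) = _
  rw [hn]; push_cast; ring

lemma cont_cauchy (h : Crv L l) {X : Type*} [TopologicalSpace X] [FirstCountableTopology X]
    {g : ℝ → ℂ} (hg : Continuous g) {p : X → ℂ} (hp : Continuous p)
    (hz : ∀ x t, l t ≠ p x) : Continuous (fun x => ∫ t in (0:ℝ)..L, g t / (l t - p x)) := by
  have hl := h.cont
  apply intervalIntegral.continuous_parametric_intervalIntegral_of_continuous'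
  simp only [Function.uncurry_def]
  apply Continuous.div (by fun_prop) (by fun_prop)
  rintro ⟨x, t⟩; exact sub_ne_zero.2 (hz x t)

lemma D_bound (h : Crv L l) : ∃ ε₀ > 0, ∃ C > 0, (∀ s x ε : ℝ, |x| ≤ L / 2 → |ε| ≤ ε₀ →
     (x ≠ 0 ∨ ε ≠ 0) →
     ‖Dk l s ε x‖ ≤ C ∧ l (s + x) - l s + Complex.I * ε * deriv l s ≠ 0 ∧
      (x:ℂ) + Complex.I * ε ≠ 0) := by
  obtain ⟨c, hc, ε₀, hε₀, H⟩ := h.chord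
  obtain ⟨M, hM, h1, h2⟩ := h.lip
  refine ⟨ε₀, hε₀, 3 * M / c, by positivity, fun s x ε hx hε hne => ?_⟩
  have H := H s x ε hx hε
  set q := (x:ℂ) + Complex.I * ε with hq
  set d := l (s + x) - l s + Complex.I * ε * deriv l s with hd
  have hq0 : q ≠ 0 := by
    intro h0
    have e1 := congrArg Complex.re h0
    have e2 := congrArg Complex.im h0
    simp [hq] at e1 e2
    tauto
  have hqp : 0 < ‖q‖ := norm_pos_iff.2 hq0
  have hd0 : d ≠ 0 := by
    rw [← norm_pos_iff]; exact lt_of_lt_of_le (by positivity) H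
  refine ⟨?_, hd0, hq0⟩
  have e : Dk l s ε x = (deriv l (s + x) * q - d) / (d * q) := by
    rw [Dk, ← hq, ← hd]; field_simp
  have en : deriv l (s + x) * q - d = (deriv l (s + x) - deriv l s) * q
      - (l (s + x) - l s - (↑(s+x) - s) * deriv l s) := by
    rw [hq, hd]; push_cast; ring
  have hxq : |x| ≤ ‖q‖ := by simpa [hq] using Complex.abs_re_le_norm q
  have hnum : ‖deriv l (s + x) * q - d‖ ≤ 3 * M * ‖q‖ ^ 2 := by
    rw [en]
    refine (norm_sub_le _ _).trans ?_
    rw [norm_mul]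
    have a1 := h1 s (s + x)
    have a2 := h2 s (s + x)
    rw [add_sub_cancel_left] at a1 a2
    have a3 : ‖deriv l (s + x) - deriv l s‖ * ‖q‖ ≤ (M * ‖q‖) * ‖q‖ := by
      gcongr; exact a1.trans (by gcongr)
    have a4 : M * |x| ^ 2 ≤ M * ‖q‖ ^ 2 := by gcongr
    nlinarith [sq_nonneg ‖q‖]
  rw [e, norm_div, norm_mul, div_le_iff₀ (by positivity)]
  calc _ ≤ 3 * M * ‖q‖ ^ 2 := hnum
    _ = 3 * M / c * (c * ‖q‖ * ‖q‖) := by field_simp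
    _ ≤ _ := by gcongr

lemma per_shift (h : Crv L l) (g : ℂ → ℂ → ℝ) (s : ℝ) :
    ∫ t in (0:ℝ)..L, g (deriv l t) (l t)
      = ∫ x in (-(L/2))..(L/2), g (deriv l (s + x)) (l (s + x)) := by
  have hp : Function.Periodic (fun t => g (deriv l t) (l t)) L := fun t => by
    simp only [h.hper, h.dper]
  have h1 := hp.intervalIntegral_add_eq 0 (s + -(L/2))
  rw [intervalIntegral.integral_comp_add_left (fun t => g (deriv l t) (l t)), zero_add] at *
  rw [h1]; congr 1; ring

lemma exists_rep (h : Crv L l) (s t : ℝ) : ∃ x, |x| ≤ L / 2 ∧ l t = l (s + x) ∧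
    deriv l t = deriv l (s + x) ∧ ∃ n : ℤ, t = s + x + n * L := by
  obtain ⟨n, hn, -⟩ := existsUnique_add_zsmul_mem_Ico h.hL t (s - L / 2)
  simp only [zsmul_eq_mul] at hn
  refine ⟨t + n * L - s, ?_, ?_, ?_, -n, by push_cast; ring⟩
  · rw [abs_le]; constructor <;> linarith [hn.1, hn.2]
  · rw [show s + (t + n * L - s) = t + n * L by ring]
    exact (Function.Periodic.int_mul (f := l) h.hper n t).symm
  · rw [show s + (t + n * L - s) = t + n * L by ring]
    exact (Function.Periodic.int_mul (f := deriv l) h.dper n t).symm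

lemma im_inv_eq (x ε : ℝ) : (1 / ((x:ℂ) + Complex.I * ε)).im = -ε / (x ^ 2 + ε ^ 2) := by
  rw [one_div, Complex.inv_im]; simp [Complex.normSq_apply]; ring_nf

lemma int_im_inv {ε : ℝ} (hε : ε ≠ 0) (L : ℝ) :
    ∫ x in (-(L/2))..(L/2), (1 / ((x:ℂ) + Complex.I * ε)).im = -2 * arctan (L / (2 * ε)) := by
  have h1 : ∀ x ∈ uIcc (-(L/2)) (L/2), HasDerivAt (fun x => -arctan (x / ε))
      ((1 / ((x:ℂ) + Complex.I * ε)).im) x := by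
    intro x _
    have := ((hasDerivAt_id x).div_const ε).arctan.neg
    convert! this using 1
    rw [im_inv_eq]
    have : 0 < ε ^ 2 := by positivity
    have : 0 < x ^ 2 + ε ^ 2 := by positivity
    simp only [id]
    have : 1 + (x / ε) ^ 2 = (x ^ 2 + ε ^ 2) / ε ^ 2 := by field_simp; ring
    rw [this]; field_simp
  rw [intervalIntegral.integral_eq_sub_of_hasDerivAt h1]
  · rw [show -(L/2) / ε = -(L / 2 / ε) by ring, arctan_neg, div_div]; ring
  · apply Continuous.intervalIntegrable
    simp_rw [im_inv_eq]
    apply Continuous.div (by fun_prop) (by fun_prop)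
    intro x; have : 0 < ε ^ 2 := by positivity
    positivity

lemma tubular (h : Crv L l) : ∃ ε₀ > 0, ∃ κ : ℤ,
    (∀ s ε, |ε| ≤ ε₀ → ε ≠ 0 → ∀ t, l t ≠ par l s ε) ∧
    (∀ s ε, 0 < ε → ε < ε₀ → wnd L l (par l s ε) = 2 * π * Complex.I * κ) ∧
    (∀ s ε, ε < 0 → -ε₀ < ε → wnd L l (par l s ε) = 2 * π * Complex.I * (κ + 1 : ℤ)) ∧
    (∀ s, ∫ t in (0:ℝ)..L, (deriv l t / (l t - l s)).im = π + 2 * π * κ) := by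
  obtain ⟨ε₀, hε₀, C, hC, H⟩ := h.D_bound
  have hL := h.hL
  have hl := h.cont
  have hl' := h.dcont
  have hoff : ∀ s ε, |ε| ≤ ε₀ → ε ≠ 0 → ∀ t, l t ≠ par l s ε := by
    intro s ε h1 h2 t
    obtain ⟨x, hx, e, -⟩ := h.exists_rep s t
    have := (H s x ε hx h1 (Or.inr h2)).2.1
    rw [e]; contrapose! this; rw [this, par]; ring
  set Φ : ℝ × ℝ → ℝ := fun p => ∫ x in (-(L/2))..(L/2), (Dk l p.1 p.2 x).im with hΦ
  set Ψ : ℝ × ℝ → ℝ := fun p => Φ p + 2 * arctan (2 * p.2 / L) with hΨ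
  set S : Set (ℝ × ℝ) := univ ×ˢ Ioo (-ε₀) ε₀ with hS
  have hSo : IsOpen S := isOpen_univ.prod isOpen_Ioo
  have hΦc : ContinuousOn Φ S := by
    rintro ⟨s, ε⟩ ⟨-, hε⟩
    apply ContinuousAt.continuousWithinAt
    have hSn : ∀ᶠ p in 𝓝 (s, ε), p ∈ S := hSo.mem_nhds ⟨trivial, hε⟩
    have hne0 : ∀ᵐ x : ℝ, x ≠ 0 := by simp [ae_iff]
    have hIoc : ∀ x ∈ uIoc (-(L/2)) (L/2), |x| ≤ L / 2 := by
      intro x hx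
      rw [uIoc_of_le (by linarith)] at hx
      exact abs_le.2 ⟨hx.1.le, hx.2⟩
    apply intervalIntegral.continuousAt_of_dominated_interval (bound := fun _ => C)
    · refine Eventually.of_forall fun p => ?_
      apply Measurable.aestronglyMeasurable
      unfold Dk
      have := hl.measurable
      have := hl'.measurable
      fun_prop
    · filter_upwards [hSn] with p hp
      filter_upwards [hne0] with x hx0 hx
      exact (Complex.abs_im_le_norm _).trans
        (H p.1 x p.2 (hIoc x hx) (abs_le.2 ⟨hp.2.1.le, hp.2.2.le⟩) (Or.inl hx0)).1
    · simp
    · filter_upwards [hne0] with x hx0 hx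
      obtain ⟨-, n1, n2⟩ := H s x ε (hIoc x hx) (abs_le.2 ⟨hε.1.le, hε.2.le⟩) (Or.inl hx0)
      unfold Dk
      apply Complex.continuous_im.continuousAt.comp
      apply ContinuousAt.sub
      · exact ContinuousAt.div (by fun_prop) (by fun_prop) n1
      · exact ContinuousAt.div (by fun_prop) (by fun_prop) n2
  have hΨc : ContinuousOn Ψ S := by
    apply hΦc.add
    apply Continuous.continuousOn
    exact continuous_const.mul (continuous_arctan.comp (by fun_prop))
  have hW : ∀ s ε, |ε| ≤ ε₀ → ε ≠ 0 →
      (wnd L l (par l s ε)).im = Φ (s, ε) - 2 * arctan (L / (2 * ε)) := by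
    intro s ε h1 h2
    have c1 : Continuous (fun x => deriv l (s + x) / (l (s + x) - par l s ε)) := by
      apply Continuous.div (by fun_prop) (by fun_prop)
      intro x; exact sub_ne_zero.2 (hoff s ε h1 h2 _)
    have c2 : Continuous (fun x:ℝ => 1 / ((x:ℂ) + Complex.I * ε)) := by
      apply Continuous.div (by fun_prop) (by fun_prop)
      intro x h0; have := congrArg Complex.im h0; simp at this; exact h2 this
    have c3 : Continuous (fun x => deriv l x / (l x - par l s ε)) := by
      apply Continuous.div (by fun_prop) (by fun_prop)
      intro x; exact sub_ne_zero.2 (hoff s ε h1 h2 _)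
    have e0 : (wnd L l (par l s ε)).im = ∫ t in (0:ℝ)..L, (deriv l t / (l t - par l s ε)).im := by
      have := Complex.imCLM.intervalIntegral_comp_comm (c3.intervalIntegrable (μ := volume) 0 L)
      simpa [wnd] using this.symm
    rw [e0, h.per_shift (fun a b => (a / (b - par l s ε)).im) s]
    have e1 : ∀ x, (Dk l s ε x).im = (deriv l (s + x) / (l (s + x) - par l s ε)).im
        - (1 / ((x:ℂ) + Complex.I * ε)).im := by
      intro x; rw [Dk, Complex.sub_im, par]; congr 4; ring
    simp only [hΦ, e1]
    rw [intervalIntegral.integral_sub, int_im_inv h2]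
    · ring
    · exact (Complex.continuous_im.comp c1).intervalIntegrable _ _
    · exact (Complex.continuous_im.comp c2).intervalIntegrable _ _
  have hWp : ∀ s ε, 0 < ε → ε < ε₀ → (wnd L l (par l s ε)).im = Ψ (s, ε) - π := by
    intro s ε h1 h2
    rw [hW s ε (by rw [abs_of_pos h1]; exact h2.le) h1.ne', hΨ]
    have : L / (2 * ε) = (2 * ε / L)⁻¹ := by rw [inv_div]
    rw [this, arctan_inv_of_pos (by positivity)]; ring
  have hWn : ∀ s ε, ε < 0 → -ε₀ < ε → (wnd L l (par l s ε)).im = Ψ (s, ε) + π := by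
    intro s ε h1 h2
    rw [hW s ε (by rw [abs_of_neg h1]; linarith) h1.ne, hΨ]
    have : L / (2 * ε) = (2 * ε / L)⁻¹ := by rw [inv_div]
    rw [this, arctan_inv_of_neg (by apply div_neg_of_neg_of_pos _ hL; linarith)]; ring
  have hcosp : ∀ s ε, 0 < ε → ε < ε₀ → cos (Ψ (s, ε)) = -1 := by
    intro s ε h1 h2
    obtain ⟨n, hn⟩ := h.wnd_int (hoff s ε (by rw [abs_of_pos h1]; exact h2.le) h1.ne')
    have e := hWp s ε h1 h2
    rw [hn] at e
    rw [Real.cos_eq_neg_one_iff]; use n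
    simp at e; linarith
  have hcos : ∀ p ∈ S, cos (Ψ p) = -1 := by
    rintro ⟨s, ε⟩ ⟨-, hε⟩
    rcases lt_trichotomy ε 0 with h0 | h0 | h0
    · obtain ⟨n, hn⟩ := h.wnd_int (hoff s ε (abs_le.2 ⟨hε.1.le, hε.2.le⟩) h0.ne)
      have e := hWn s ε h0 hε.1
      rw [hn] at e
      rw [Real.cos_eq_neg_one_iff]; use n - 1
      simp at e; push_cast; linarith
    · subst h0
      have hc : ContinuousAt (fun ε => cos (Ψ (s, ε))) 0 := by
        apply continuous_cos.continuousAt.comp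
        exact ContinuousAt.comp (f := fun ε => (s, ε)) (x := (0:ℝ)) (g := Ψ)
          (hΨc.continuousAt (hSo.mem_nhds ⟨trivial, hε⟩))
          (by fun_prop)
      have t1 := hc.tendsto.mono_left (nhdsWithin_le_nhds (s := Ioi 0))
      have t2 : Tendsto (fun ε => cos (Ψ (s, ε))) (𝓝[>] 0) (𝓝 (-1)) := by
        apply tendsto_const_nhds.congr'
        filter_upwards [Ioo_mem_nhdsGT hε₀] with ε he
        exact (hcosp s ε he.1 he.2).symm
      exact tendsto_nhds_unique t1 t2
    · exact hcosp s ε h0 hε.2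
  have hIntg : ∀ p : ℝ × ℝ, ∃ n : ℤ, p ∈ S → Ψ p = π + n * (2 * π) := by
    intro p
    by_cases hp : p ∈ S
    · obtain ⟨n, hn⟩ := Real.cos_eq_neg_one_iff.1 (hcos p hp)
      exact ⟨n, fun _ => hn.symm⟩
    · exact ⟨0, fun h => absurd h hp⟩
  choose N hN using hIntg
  have hNc : ContinuousOn N S := by
    rw [Int.isClosedEmbedding_coe_real.isInducing.continuousOn_iff]
    have : ContinuousOn (fun p => (Ψ p - π) / (2 * π)) S :=
      (hΨc.sub continuousOn_const).div_const _
    refine this.congr fun p hp => ?_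
    simp only [Function.comp, hN p hp]
    have := pi_pos
    field_simp; ring
  have hSc : IsPreconnected S := isPreconnected_univ.prod isPreconnected_Ioo
  have h00 : ((0:ℝ), (0:ℝ)) ∈ S := ⟨trivial, by simpa using hε₀, by simpa using hε₀⟩
  have hΨκ : ∀ p ∈ S, Ψ p = π + 2 * π * N (0, 0) := by
    intro p hp
    rw [hN p hp, hSc.constant hNc hp h00]; ring
  have hfin : ∀ z (k : ℤ), (∀ t, l t ≠ z) → (wnd L l z).im = 2 * π * k →
      wnd L l z = 2 * π * Complex.I * k := by
    intro z k hz hk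
    obtain ⟨n, hn⟩ := h.wnd_int hz
    rw [hn] at hk ⊢
    simp at hk
    rw [hk]
  refine ⟨ε₀, hε₀, N (0, 0), hoff, ?_, ?_, ?_⟩
  · intro s ε h1 h2
    apply hfin _ _ (hoff s ε (by rw [abs_of_pos h1]; exact h2.le) h1.ne')
    rw [hWp s ε h1 h2, hΨκ _ ⟨trivial, by linarith, h2⟩]; ring
  · intro s ε h1 h2
    apply hfin _ _ (hoff s ε (by rw [abs_of_neg h1]; linarith) h1.ne)
    rw [hWn s ε h1 h2, hΨκ _ ⟨trivial, h2, by linarith⟩]; push_cast; ring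
  · intro s
    rw [h.per_shift (fun a b => (a / (b - l s)).im) s, ← hΨκ (s, 0) ⟨trivial, by linarith, hε₀⟩]
    simp only [hΨ, hΦ, Dk]
    have : ∀ x : ℝ, ((1:ℂ) / x).im = 0 := fun x => by
      rw [← Complex.ofReal_one, ← Complex.ofReal_div, Complex.ofReal_im]
    simp [-one_div, this]

end Crv

namespace Crv
variable {L : ℝ} {l : ℝ → ℂ}

lemma nearest (h : Crv L l) (z : ℂ) : ∃ s ∈ Icc 0 L, ∀ t, ‖l s - z‖ ≤ ‖l t - z‖ := by
  have hl := h.cont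
  obtain ⟨s, hs, hm⟩ := (isCompact_Icc (a := (0:ℝ)) (b := L)).exists_isMinOn
    (nonempty_Icc.2 h.hL.le) (f := fun t => ‖l t - z‖) (by fun_prop)
  refine ⟨s, hs, fun t => ?_⟩
  obtain ⟨y, hy, hy2⟩ := Function.Periodic.exists_mem_Ico₀ (f := l) h.hper h.hL t
  rw [hy2]
  exact hm ⟨hy.1, hy.2.le⟩

lemma nearest_normal (h : Crv L l) (z : ℂ) (s : ℝ) (hs : ∀ t, ‖l s - z‖ ≤ ‖l t - z‖) :
    ∃ ρ : ℝ, z = par l s ρ := by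
  have hd : HasDerivAt (fun t => ((l t - z).re) ^ 2 + ((l t - z).im) ^ 2)
      (2 * (l s - z).re * (deriv l s).re + 2 * (l s - z).im * (deriv l s).im) s := by
    have h0 := (h.hd s).sub_const z
    have h1 : HasDerivAt (fun t => (l t - z).re) (deriv l s).re s :=
      Complex.reCLM.hasFDerivAt.comp_hasDerivAt s h0
    have h2 : HasDerivAt (fun t => (l t - z).im) (deriv l s).im s :=
      Complex.imCLM.hasFDerivAt.comp_hasDerivAt s h0
    have := (h1.pow 2).add (h2.pow 2)
    convert! this using 1
    simp
  have hmin : IsLocalMin (fun t => ((l t - z).re) ^ 2 + ((l t - z).im) ^ 2) s := by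
    refine Eventually.of_forall fun t => ?_
    have := pow_le_pow_left₀ (norm_nonneg _) (hs t) 2
    rw [← Complex.normSq_eq_norm_sq, ← Complex.normSq_eq_norm_sq, Complex.normSq_apply,
      Complex.normSq_apply] at this
    simp only; linarith
  have h0 := hmin.hasDerivAt_eq_zero hd
  have h1 : (deriv l s).re ^ 2 + (deriv l s).im ^ 2 = 1 := by
    have := Complex.normSq_eq_norm_sq (deriv l s)
    rw [h.harc, Complex.normSq_apply] at this; linarith
  set q := l s - z with hq
  set d := deriv l s with hd'
  refine ⟨q.im * d.re - q.re * d.im, ?_⟩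
  have hz : z = l s - q := by rw [hq]; ring
  rw [hz, par, ← hd', sub_right_inj]
  have h3 : q.re * d.re + q.im * d.im = 0 := by linarith
  apply Complex.ext
  · simp
    linear_combination (-q.re) * h1 + d.re * h3
  · simp
    linear_combination (-q.im) * h1 + d.im * h3

lemma wnd_two (h : Crv L l) {ε₀ : ℝ} (hε₀ : 0 < ε₀) {κ : ℤ}
    (h1 : ∀ s ε, 0 < ε → ε < ε₀ → wnd L l (par l s ε) = 2 * π * Complex.I * κ)
    (h2 : ∀ s ε, ε < 0 → -ε₀ < ε → wnd L l (par l s ε) = 2 * π * Complex.I * (κ + 1 : ℤ))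
    (z : ℂ) (hz : ∀ t, l t ≠ z) :
    wnd L l z = 2 * π * Complex.I * κ ∨ wnd L l z = 2 * π * Complex.I * (κ + 1 : ℤ) := by
  obtain ⟨s, -, hs⟩ := h.nearest z
  obtain ⟨ρ, hρ⟩ := h.nearest_normal z s hs
  have hρ0 : ρ ≠ 0 := by
    rintro rfl; apply hz s; rw [hρ, par]; simp
  have hoff : ∀ θ ∈ Ioc (0:ℝ) 1, ∀ t, l t ≠ par l s (θ * ρ) := by
    intro θ hθ t ht
    have e : l t - z = (1 - θ : ℝ) * (l s - z) := by
      rw [ht, hρ, par, par]; push_cast; ring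
    have := hs t
    rw [e, norm_mul, Complex.norm_real, Real.norm_eq_abs, abs_of_nonneg (by linarith [hθ.2])] at this
    have hp : 0 < ‖l s - z‖ := norm_pos_iff.2 (sub_ne_zero.2 (hz s))
    nlinarith [hθ.1]
  have hIntg : ∀ x : Ioc (0:ℝ) 1, ∃ n : ℤ, wnd L l (par l s (x * ρ)) = 2 * π * Complex.I * n :=
    fun x => h.wnd_int (hoff x x.2)
  choose N hN using hIntg
  have hc : Continuous (fun x : Ioc (0:ℝ) 1 => wnd L l (par l s (x * ρ))) := by
    unfold wnd
    apply h.cont_cauchy h.dcont (p := fun x : Ioc (0:ℝ) 1 => par l s (x * ρ))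
    · unfold par; fun_prop
    · exact fun x => hoff x x.2
  have hNc : Continuous N := by
    rw [Int.isClosedEmbedding_coe_real.isInducing.continuous_iff]
    have : ((fun n : ℤ => (n:ℝ)) ∘ N)
        = fun x : Ioc (0:ℝ) 1 => (wnd L l (par l s (x * ρ))).im / (2 * π) := by
      funext x
      rw [hN x]; simp
    rw [this]
    exact (Complex.continuous_im.comp hc).div_const _
  have hpc : PreconnectedSpace (Ioc (0:ℝ) 1) := isPreconnected_iff_preconnectedSpace.1 isPreconnected_Ioc
  set θ := min 1 (ε₀ / 2 / |ρ|) with hθ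
  have hρp : 0 < |ρ| := abs_pos.2 hρ0
  have hθm : θ ∈ Ioc (0:ℝ) 1 := ⟨by positivity, min_le_left _ _⟩
  have hθ2 : θ * |ρ| < ε₀ := by
    calc θ * |ρ| ≤ (ε₀ / 2 / |ρ|) * |ρ| := by gcongr; exact min_le_right _ _
      _ = ε₀ / 2 := by field_simp
      _ < ε₀ := by linarith
  have hNN := PreconnectedSpace.constant hpc hNc (x := ⟨1, by simp⟩) (y := ⟨θ, hθm⟩)
  have e1 := hN ⟨1, by simp⟩
  have e2 := hN ⟨θ, hθm⟩
  rw [hNN, ← e2] at e1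
  simp only [one_mul, ← hρ] at e1
  rw [e1]
  rcases lt_or_gt_of_ne hρ0 with h0 | h0
  · right
    rw [abs_of_neg h0] at hθ2
    exact h2 s _ (mul_neg_of_pos_of_neg hθm.1 h0) (by linarith)
  · left
    rw [abs_of_pos h0] at hθ2
    exact h1 s _ (mul_pos hθm.1 h0) hθ2

lemma exists_wnd_zero (h : Crv L l) : ∃ z, (∀ t, l t ≠ z) ∧ wnd L l z = 0 := by
  obtain ⟨M, hM, hb⟩ := bdd_of_periodic h.hL h.cont h.hper
  have hL := h.hL
  have hlow : ∀ t, L + 1 ≤ ‖l t - ((M + L + 1 : ℝ) : ℂ)‖ := by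
    intro t
    have := norm_sub_norm_le ((M + L + 1 : ℝ) : ℂ) (l t)
    rw [Complex.norm_real, Real.norm_eq_abs, abs_of_pos (by linarith), norm_sub_rev] at this
    linarith [hb t]
  have hoff : ∀ t, l t ≠ ((M + L + 1 : ℝ) : ℂ) := by
    intro t ht; have := hlow t; rw [ht] at this; simp at this; linarith
  refine ⟨((M + L + 1 : ℝ) : ℂ), hoff, ?_⟩
  obtain ⟨n, hn⟩ := h.wnd_int hoff
  have hle : ‖wnd L l ((M + L + 1 : ℝ) : ℂ)‖ ≤ (1 / (L + 1)) * |L - 0| := by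
    apply intervalIntegral.norm_integral_le_of_norm_le_const
    intro t _
    rw [norm_div, h.harc]
    have := hlow t
    gcongr
  rw [sub_zero, abs_of_pos hL, one_div_mul_eq_div] at hle
  have hlt : L / (L + 1) < 1 := by rw [div_lt_one (by linarith)]; linarith
  rw [hn] at hle ⊢
  rw [norm_mul, norm_mul, norm_mul] at hle
  simp only [Complex.norm_ofNat, Complex.norm_real, Real.norm_eq_abs, abs_of_pos pi_pos,
    Complex.norm_I, Complex.norm_intCast] at hle
  have hn0 : n = 0 := by
    by_contra hne
    have : (1:ℝ) ≤ |(n:ℝ)| := by exact_mod_cast Int.one_le_abs hne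
    nlinarith [pi_gt_three]
  simp [hn0]

/-- all needed facts on the winding number -/
lemma winding (h : Crv L l)
    (horient : ∃ z₀ : ℂ, (∀ s, l s ≠ z₀) ∧ wnd L l z₀ = 2 * (π : ℂ) * Complex.I) :
    (∀ z, (∀ t, l t ≠ z) → wnd L l z = 0 ∨ wnd L l z = 2 * π * Complex.I) ∧
    (∀ s, ∫ t in (0:ℝ)..L, (deriv l t / (l t - l s)).im = π) ∧
    (∃ ε₀ > 0, ∀ s ε, 0 < ε → ε < ε₀ → (∀ t, l t ≠ par l s ε) ∧ wnd L l (par l s ε) = 0) := by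
  obtain ⟨ε₀, hε₀, κ, h0, h1, h2, h3⟩ := h.tubular
  have h4 := h.wnd_two hε₀ h1 h2
  have hpi : (2 * π * Complex.I : ℂ) ≠ 0 := by simp [pi_ne_zero]
  have hκ : κ = 0 := by
    obtain ⟨z, hz, hwz⟩ := h.exists_wnd_zero
    obtain ⟨z', hz', hwz'⟩ := horient
    have a := h4 z hz
    have b := h4 z' hz'
    rw [hwz] at a
    rw [hwz'] at b
    have a' : κ = 0 ∨ κ + 1 = 0 := by
      rcases a with a | a
      · left; have := (mul_eq_zero.1 a.symm).resolve_left hpi; exact_mod_cast this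
      · right; have := (mul_eq_zero.1 a.symm).resolve_left hpi; exact_mod_cast this
    have b' : κ = 1 ∨ κ + 1 = 1 := by
      rcases b with b | b
      · left
        have : (κ:ℂ) = 1 := mul_left_cancel₀ hpi (by rw [← b]; ring)
        exact_mod_cast this
      · right
        have : ((κ + 1 : ℤ):ℂ) = 1 := mul_left_cancel₀ hpi (by rw [← b]; ring)
        exact_mod_cast this
    omega
  subst hκ
  refine ⟨fun z hz => by simpa using h4 z hz, fun s => by simpa using h3 s, ε₀, hε₀, ?_⟩
  intro s ε e1 e2
  exact ⟨h0 s ε (by rw [abs_of_pos e1]; exact e2.le) e1.ne', by simpa using h1 s ε e1 e2⟩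

/-- boundedness of the kernel -/
lemma K_bdd (h : Crv L l) : ∃ C > 0, ∀ s t, |(deriv l s / (l s - l t)).im| ≤ C := by
  obtain ⟨ε₀, hε₀, C, hC, H⟩ := h.D_bound
  refine ⟨C, hC, fun s t => ?_⟩
  obtain ⟨x, hx, e1, e2, -⟩ := h.exists_rep t s
  rw [e1, e2]
  by_cases hx0 : x = 0
  · subst hx0; simp [hC.le]
  · have := (H t x 0 hx (by simp [hε₀.le]) (Or.inl hx0)).1
    have e : (deriv l (t + x) / (l (t + x) - l t)).im = (Dk l t 0 x).im := by
      have : ((1:ℂ) / x).im = 0 := by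
        rw [← Complex.ofReal_one, ← Complex.ofReal_div, Complex.ofReal_im]
      rw [Dk]; simp [-one_div, this]
    rw [e]
    exact (Complex.abs_im_le_norm _).trans this

end Crv

lemma integral_polar (G : ℂ → ℂ) (hm : Measurable G) (hG : Integrable G) :
    ∫ z, G z = ∫ r in Ioi (0:ℝ), ∫ θ in (-π)..π, (r:ℂ) * G (circleMap 0 r θ) := by
  have hsy : ∀ p : ℝ × ℝ, Complex.polarCoord.symm p = circleMap 0 p.1 p.2 := by
    intro p
    rw [Complex.polarCoord_symm_apply, circleMap, Complex.exp_mul_I]; simp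
  rw [← Complex.integral_comp_polarCoord_symm]
  have htar : polarCoord.target = Ioi (0:ℝ) ×ˢ Ioo (-π) π := rfl
  have hmeas : Measurable (fun p : ℝ × ℝ => p.1 • G (Complex.polarCoord.symm p)) := by
    simp_rw [hsy, circleMap]
    fun_prop
  rw [htar, Measure.volume_eq_prod, setIntegral_prod]
  · apply setIntegral_congr_fun measurableSet_Ioi
    intro r hr
    simp only
    rw [intervalIntegral.integral_of_le (by linarith [pi_pos]), integral_Ioc_eq_integral_Ioo]
    apply setIntegral_congr_fun measurableSet_Ioo
    intro θ _
    simp only [hsy, Complex.real_smul]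
  · refine ⟨hmeas.aestronglyMeasurable, ?_⟩
    have h1 := Complex.lintegral_comp_polarCoord_symm (fun z => ‖G z‖ₑ)
    have h2 : ∫⁻ z, ‖G z‖ₑ < ⊤ := hG.2
    rw [← h1, htar] at h2
    refine lt_of_eq_of_lt ?_ h2
    apply setLIntegral_congr_fun (measurableSet_Ioi.prod measurableSet_Ioo)
    rintro ⟨r, θ⟩ ⟨hr, -⟩
    simp only [enorm_smul, smul_eq_mul]
    congr 1
    rw [Real.enorm_eq_ofReal (le_of_lt hr)]

lemma circ_int {r : ℝ} (hr : 0 < r) {a : ℂ} (ha : ‖a‖ ≠ r) :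
    ∫ θ in (-π)..π, circleMap 0 r θ / (circleMap 0 r θ - a) = if ‖a‖ < r then (2 * π : ℂ) else 0 := by
  have hp : Function.Periodic (fun θ => circleMap 0 r θ / (circleMap 0 r θ - a)) (2 * π) := by
    intro θ; simp only [periodic_circleMap 0 r θ]
  have h1 := hp.intervalIntegral_add_eq 0 (-π)
  rw [show -π + 2 * π = π by ring, zero_add] at h1
  rw [← h1]
  have h2 : ∮ z in C(0, r), (z - a)⁻¹
      = Complex.I * ∫ θ in (0:ℝ)..(2 * π), circleMap 0 r θ / (circleMap 0 r θ - a) := by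
    rw [circleIntegral, ← intervalIntegral.integral_const_mul]
    congr 1; funext θ
    rw [deriv_circleMap, smul_eq_mul]; ring
  have hI := Complex.I_ne_zero
  split_ifs with hlt
  · rw [circleIntegral.integral_sub_inv_of_mem_ball (by simpa using hlt)] at h2
    apply mul_left_cancel₀ hI
    rw [← h2]; ring
  · have h3 : ∮ z in C(0, r), (z - a)⁻¹ = 0 := by
      apply Complex.circleIntegral_eq_zero_of_differentiable_on_off_countable hr.le countable_empty
      · intro z hz
        apply ContinuousAt.continuousWithinAt
        apply ContinuousAt.inv₀ (by fun_prop)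
        rw [sub_ne_zero]; rintro rfl
        simp at hz; exact hlt (lt_of_le_of_ne hz ha)
      · intro z hz
        have : z - a ≠ 0 := by
          rw [sub_ne_zero]; rintro rfl
          simp at hz; exact hlt hz
        fun_prop (disch := assumption)
    rw [h3] at h2
    exact (mul_eq_zero.1 h2.symm).resolve_left hI

lemma radial_log {A C : ℝ} (hA : 0 < A) (hC : 0 < C) :
    ∫ r in Ioi (0:ℝ), (1 / r) * ((if A < r then 1 else 0) - (if C < r then 1 else 0))
      = log C - log A := by
  wlog hAC : A ≤ C generalizing A C
  · have := this hC hA (le_of_not_ge hAC)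
    rw [← neg_sub, ← this, ← integral_neg]
    congr 1; funext r; ring
  have : ∀ r : ℝ, (1 / r) * ((if A < r then 1 else 0) - (if C < r then 1 else 0))
      = indicator (Ioc A C) (fun r => 1 / r) r := by
    intro r
    by_cases h1 : A < r <;> by_cases h2 : C < r <;> simp [indicator, h1, h2]
    linarith
  simp_rw [this]
  rw [setIntegral_indicator measurableSet_Ioc, inter_eq_right.2,
    ← intervalIntegral.integral_of_le hAC, integral_one_div_of_pos hA hC, log_div hC.ne' hA.ne']
  intro x hx; exact hA.trans hx.1

lemma radial_sq {A ρ : ℝ} (hA : 0 ≤ A) (hρ : 0 < ρ) :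
    ∫ r in Ioi (0:ℝ), (if r < ρ then (if A < r then 2 * π * r else 0) else 0)
      = π * max (ρ ^ 2 - A ^ 2) 0 := by
  have : ∀ r : ℝ, (if r < ρ then (if A < r then 2 * π * r else 0) else 0)
      = indicator (Ioo A ρ) (fun r => 2 * π * r) r := by
    intro r
    by_cases h1 : A < r <;> by_cases h2 : r < ρ <;> simp [indicator, h1, h2]
  simp_rw [this]
  rw [setIntegral_indicator measurableSet_Ioo, inter_eq_right.2]
  · rcases le_or_gt ρ A with h | h
    · rw [Ioo_eq_empty (by linarith), max_eq_right (by nlinarith)]; simp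
    · rw [← integral_Ioc_eq_integral_Ioo, ← intervalIntegral.integral_of_le h.le,
        intervalIntegral.integral_const_mul, integral_id, max_eq_left (by nlinarith)]; ring
  · intro x hx; exact lt_of_le_of_lt hA hx.1

lemma planar0 {a c : ℂ} (ha : a ≠ 0) (hc : c ≠ 0) (hac : a ≠ c)
    (hI : Integrable (fun z : ℂ => 1 / ((z - a) * (z - c) * starRingEnd ℂ z))) :
    ∫ z : ℂ, 1 / ((z - a) * (z - c) * starRingEnd ℂ z)
      = (2 * π / (a - c)) * (log ‖c‖ - log ‖a‖ : ℝ) := by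
  rw [integral_polar _ (by fun_prop) hI]
  have hac' : a - c ≠ 0 := sub_ne_zero.2 hac
  have key : ∀ᵐ r : ℝ, r ∈ Ioi (0:ℝ) →
      ∫ θ in (-π)..π, (r:ℂ) * (1 / ((circleMap 0 r θ - a) * (circleMap 0 r θ - c) *
        starRingEnd ℂ (circleMap 0 r θ))) =
      (2 * π / (a - c)) * (((1 / r) * ((if ‖a‖ < r then 1 else 0) - (if ‖c‖ < r then 1 else 0)) : ℝ) : ℂ) := by
    have h1 : ∀ᵐ r : ℝ, r ≠ ‖a‖ := by simp [ae_iff]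
    have h2 : ∀ᵐ r : ℝ, r ≠ ‖c‖ := by simp [ae_iff]
    filter_upwards [h1, h2] with r hra hrc hr
    have hr : 0 < r := hr
    have n1 : ∀ θ, circleMap 0 r θ - a ≠ 0 := by
      intro θ h0; apply hra; rw [← sub_eq_zero.1 h0]; simp [abs_of_pos hr]
    have n2 : ∀ θ, circleMap 0 r θ - c ≠ 0 := by
      intro θ h0; apply hrc; rw [← sub_eq_zero.1 h0]; simp [abs_of_pos hr]
    have e : ∀ θ, (r:ℂ) * (1 / ((circleMap 0 r θ - a) * (circleMap 0 r θ - c) *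
        starRingEnd ℂ (circleMap 0 r θ))) = (1 / (r * (a - c))) *
          (circleMap 0 r θ / (circleMap 0 r θ - a) - circleMap 0 r θ / (circleMap 0 r θ - c)) := by
      intro θ
      have n3 : circleMap 0 r θ ≠ 0 := by simpa using circleMap_ne_center (c := 0) (θ := θ) hr.ne'
      have n4 : starRingEnd ℂ (circleMap 0 r θ) ≠ 0 := by simpa using n3
      have n5 : starRingEnd ℂ (circleMap 0 r θ) = r ^ 2 / circleMap 0 r θ := by
        rw [eq_div_iff n3, mul_comm, Complex.mul_conj, Complex.normSq_eq_norm_sq]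
        simp
      have n6 : (r:ℂ) ≠ 0 := by exact_mod_cast hr.ne'
      have := n1 θ
      have := n2 θ
      rw [n5]; field_simp; ring
    simp_rw [e]
    rw [intervalIntegral.integral_const_mul, intervalIntegral.integral_sub, circ_int hr hra.symm,
      circ_int hr hrc.symm]
    · have n6 : (r:ℂ) ≠ 0 := by exact_mod_cast hr.ne'
      split_ifs <;> simp <;> field_simp
    · apply Continuous.intervalIntegrable
      exact (continuous_circleMap _ _).div (by fun_prop) n1
    · apply Continuous.intervalIntegrable
      exact (continuous_circleMap _ _).div (by fun_prop) n2
  rw [setIntegral_congr_ae measurableSet_Ioi key, integral_const_mul, integral_complex_ofReal,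
    radial_log (norm_pos_iff.2 ha) (norm_pos_iff.2 hc)]

lemma planar {a b c : ℂ} (ha : a ≠ b) (hc : c ≠ b) (hac : a ≠ c)
    (hI : Integrable (fun z : ℂ => 1 / ((z - a) * (z - c) * starRingEnd ℂ (z - b)))) :
    ∫ z : ℂ, 1 / ((z - a) * (z - c) * starRingEnd ℂ (z - b))
      = (2 * π / (a - c)) * (log ‖c - b‖ - log ‖a - b‖ : ℝ) := by
  have h1 := hI.comp_add_right b
  have h2 := integral_add_right_eq_self (μ := volume)
    (fun z : ℂ => 1 / ((z - a) * (z - c) * starRingEnd ℂ (z - b))) b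
  have e : ∀ z : ℂ, 1 / ((z + b - a) * (z + b - c) * starRingEnd ℂ (z + b - b)) =
      1 / ((z - (a - b)) * (z - (c - b)) * starRingEnd ℂ z) := by
    intro z; congr 3 <;> ring_nf
  simp_rw [e] at h1 h2
  rw [← h2, planar0 (sub_ne_zero.2 ha) (sub_ne_zero.2 hc) (by simpa using hac) h1]
  congr 2; ring

lemma integrableOn_inv_norm (R : ℝ) : IntegrableOn (fun z : ℂ => ‖z‖⁻¹) (Metric.ball 0 R) := by
  apply integrableOn_ball_of_norm_le_rpow (C := 1) (α := 1) (by simp) (by simp)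
  · refine Eventually.of_forall fun z => ?_
    rw [Real.rpow_neg_one]; simp
  · exact (measurable_norm.inv).aestronglyMeasurable

lemma bump0 (q : ℂ) {ρ : ℝ} (hρ : 0 < ρ) :
    ∫ z : ℂ, indicator (Metric.ball 0 ρ) (fun z => z / (z - q)) z
      = (π * max (ρ ^ 2 - ‖q‖ ^ 2) 0 : ℝ) := by
  have hm : Measurable (indicator (Metric.ball 0 ρ) (fun z : ℂ => z / (z - q))) := by
    apply Measurable.indicator (by fun_prop) Metric.isOpen_ball.measurableSet
  have hI : Integrable (indicator (Metric.ball 0 ρ) (fun z : ℂ => z / (z - q))) := by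
    have h0 := (((integrableOn_inv_norm (ρ + ‖q‖)).integrable_indicator
      Metric.isOpen_ball.measurableSet).comp_sub_right q).const_mul ρ
    refine h0.mono' hm.aestronglyMeasurable (Eventually.of_forall fun z => ?_)
    by_cases hz : z ∈ Metric.ball 0 ρ
    · have hz2 : z - q ∈ Metric.ball 0 (ρ + ‖q‖) := by
        simp at hz ⊢
        exact (norm_sub_le _ _).trans_lt (by linarith)
      rw [indicator_of_mem hz, indicator_of_mem hz2, norm_div, div_eq_mul_inv]
      simp at hz
      gcongr
    · rw [indicator_of_notMem hz, norm_zero]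
      apply mul_nonneg hρ.le
      apply indicator_nonneg; intro z _; positivity
  rw [integral_polar _ hm hI]
  have key : ∀ᵐ r : ℝ, r ∈ Ioi (0:ℝ) →
      ∫ θ in (-π)..π, (r:ℂ) * (indicator (Metric.ball 0 ρ) (fun z => z / (z - q)) (circleMap 0 r θ))
      = ((if r < ρ then (if ‖q‖ < r then 2 * π * r else 0) else 0 : ℝ) : ℂ) := by
    have h1 : ∀ᵐ r : ℝ, r ≠ ‖q‖ := by simp [ae_iff]
    filter_upwards [h1] with r hra hr
    have hr : 0 < r := hr
    by_cases hlt : r < ρ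
    · have : ∀ θ, circleMap 0 r θ ∈ Metric.ball (0:ℂ) ρ := by
        intro θ; simp [abs_of_pos hr, hlt]
      simp_rw [indicator_of_mem (this _)]
      rw [intervalIntegral.integral_const_mul, circ_int hr hra.symm]
      simp only [hlt, if_true]
      split_ifs <;> simp; ring
    · have : ∀ θ, circleMap 0 r θ ∉ Metric.ball (0:ℂ) ρ := by
        intro θ; simp [abs_of_pos hr]; linarith
      simp_rw [indicator_of_notMem (this _)]
      simp [hlt]
  rw [setIntegral_congr_ae measurableSet_Ioi key, integral_complex_ofReal, radial_sq (norm_nonneg _) hρ]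

lemma bump (b p : ℂ) {ρ : ℝ} (hρ : 0 < ρ) :
    ∫ z : ℂ, indicator (Metric.ball b ρ) (fun z => (z - b) / (z - p)) z
      = (π * max (ρ ^ 2 - ‖p - b‖ ^ 2) 0 : ℝ) := by
  rw [← bump0 (p - b) hρ, ← integral_sub_right_eq_self (μ := volume)
    (indicator (Metric.ball 0 ρ) (fun z => z / (z - (p - b)))) b]
  congr 1; funext z
  by_cases hz : z ∈ Metric.ball b ρ
  · rw [indicator_of_mem hz, indicator_of_mem (by simpa [dist_eq_norm] using hz)]
    congr 1; ring
  · rw [indicator_of_notMem hz, indicator_of_notMem (by simpa [dist_eq_norm] using hz)]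

/-- arclength measure on the parameter interval -/
noncomputable def mu (L : ℝ) : Measure ℝ := volume.restrict (Ioc 0 L)

instance (L : ℝ) : IsFiniteMeasure (mu L) := by unfold mu; infer_instance

/-- dominating kernel -/
noncomputable def Gk (L q s t : ℝ) : ℝ := |s - t| ^ (-q) + |s - t + L| ^ (-q) + |s - t - L| ^ (-q)

/-- nondegenerate parameters -/
def nd (L s t : ℝ) : Prop := s - t ≠ 0 ∧ s - t + L ≠ 0 ∧ s - t - L ≠ 0

lemma Gk_nonneg (L q s t : ℝ) : 0 ≤ Gk L q s t := by unfold Gk; positivity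

lemma Gk_meas (L q : ℝ) : Measurable (fun p : ℝ × ℝ => Gk L q p.1 p.2) := by
  unfold Gk; fun_prop

lemma ae_mu_mem (L : ℝ) : ∀ᵐ t ∂(mu L), t ∈ Ioc 0 L := ae_restrict_mem measurableSet_Ioc

lemma ae_nd (L s : ℝ) : ∀ᵐ t ∂(mu L), nd L s t := by
  have : ∀ᵐ t : ℝ, nd L s t := by
    have h1 : ∀ᵐ t : ℝ, t ≠ s := by simp [ae_iff]
    have h2 : ∀ᵐ t : ℝ, t ≠ s + L := by simp [ae_iff]
    have h3 : ∀ᵐ t : ℝ, t ≠ s - L := by simp [ae_iff]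
    filter_upwards [h1, h2, h3] with t a b c
    refine ⟨fun h => a (by linarith), fun h => b (by linarith), fun h => c (by linarith)⟩
  exact ae_restrict_of_ae this

lemma lint_Gk (L : ℝ) {q : ℝ} (hq : q < 1) : ∃ C : ℝ≥0∞, C < ⊤ ∧ ∀ s ∈ Icc 0 L,
    ∫⁻ t, ENNReal.ofReal (Gk L q s t) ∂(mu L) ≤ C := by
  set f : ℝ → ℝ≥0∞ := indicator (Metric.ball 0 (3 * L)) (fun x => ENNReal.ofReal (|x| ^ (-q))) with hf
  have hfin : ∫⁻ x, f x < ⊤ := by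
    have : IntegrableOn (fun x : ℝ => |x| ^ (-q)) (Metric.ball 0 (3 * L)) := by
      apply integrableOn_ball_of_norm_le_rpow (C := 1) (α := q) (by simp) (by simpa using hq)
      · refine Eventually.of_forall fun z => ?_
        rw [one_mul, Real.norm_eq_abs, Real.norm_eq_abs, abs_of_nonneg (by positivity)]
      · apply Measurable.aestronglyMeasurable; fun_prop
    rw [hf, lintegral_indicator Metric.isOpen_ball.measurableSet]
    exact this.lintegral_lt_top
  have key : ∀ s ∈ Icc 0 L, ∀ d, |d| ≤ L →
      ∫⁻ t, ENNReal.ofReal (|s - t + d| ^ (-q)) ∂(mu L) ≤ ∫⁻ x, f x := by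
    intro s hs d hd
    rw [← lintegral_sub_left_eq_self f (s + d)]
    unfold mu
    rw [← lintegral_indicator measurableSet_Ioc]
    apply lintegral_mono
    intro t
    by_cases ht : t ∈ Ioc 0 L
    · rw [indicator_of_mem ht]
      show _ ≤ f (s + d - t)
      rw [hf, indicator_of_mem]
      · rw [show s - t + d = s + d - t by ring]
      · rw [mem_ball_zero_iff, Real.norm_eq_abs, abs_lt]
        have := abs_le.1 hd
        constructor <;> linarith [hs.1, hs.2, ht.1, ht.2]
    · simp [indicator_of_notMem ht]
  refine ⟨3 * ∫⁻ x, f x, ENNReal.mul_lt_top (by simp) hfin, fun s hs => ?_⟩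
  have hL : 0 ≤ L := hs.1.trans hs.2
  unfold Gk
  calc _ = ∫⁻ t, (ENNReal.ofReal (|s - t + 0| ^ (-q)) + ENNReal.ofReal (|s - t + L| ^ (-q))
        + ENNReal.ofReal (|s - t + -L| ^ (-q))) ∂(mu L) := by
        congr 1; funext t
        rw [ENNReal.ofReal_add (by positivity) (by positivity),
          ENNReal.ofReal_add (by positivity) (by positivity), add_zero, sub_eq_add_neg _ L]
    _ ≤ (∫⁻ x, f x) + (∫⁻ x, f x) + (∫⁻ x, f x) := by
        rw [lintegral_add_left (by fun_prop), lintegral_add_left (by fun_prop)]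
        exact add_le_add (add_le_add (key s hs 0 (by simpa using hL))
          (key s hs L (by rw [abs_of_nonneg hL])))
          (key s hs (-L) (by rw [abs_neg, abs_of_nonneg hL]))
    _ = _ := by ring

lemma Gk_integrable (L : ℝ) {q : ℝ} (hq : q < 1) :
    Integrable (fun p : ℝ × ℝ => Gk L q p.1 p.2) ((mu L).prod (mu L)) := by
  refine ⟨(Gk_meas L q).aestronglyMeasurable, ?_⟩
  obtain ⟨C, hC, H⟩ := lint_Gk L hq
  rw [hasFiniteIntegral_iff_norm]
  have : ∀ p : ℝ × ℝ, ‖Gk L q p.1 p.2‖ = Gk L q p.1 p.2 := fun p => by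
    rw [Real.norm_eq_abs, abs_of_nonneg (Gk_nonneg _ _ _ _)]
  simp_rw [this]
  rw [lintegral_prod _ ((Gk_meas L q).ennreal_ofReal.aemeasurable)]
  calc _ ≤ ∫⁻ _, C ∂(mu L) := by
        apply lintegral_mono_ae
        filter_upwards [ae_mu_mem L] with s hs
        exact H s ⟨hs.1.le, hs.2⟩
    _ = C * (mu L) univ := by simp
    _ < ⊤ := ENNReal.mul_lt_top hC (measure_lt_top _ _)

namespace Crv
variable {L : ℝ} {l : ℝ → ℂ}

lemma chord_nd (h : Crv L l) : ∃ c > 0, ∃ ε₀ > 0, ∀ s ∈ Icc 0 L, ∀ t ∈ Icc 0 L, nd L s t →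
    ∀ ε : ℝ, |ε| ≤ ε₀ → 0 < ‖l t - par l s ε‖ ∧ ∀ q, 0 ≤ q →
      ‖l t - par l s ε‖ ^ (-q) ≤ c ^ (-q) * Gk L q s t := by
  obtain ⟨c, hc, ε₀, hε₀, H⟩ := h.chord
  have hL := h.hL
  refine ⟨c, hc, ε₀, hε₀, fun s hs t ht hnd ε hε => ?_⟩
  obtain ⟨x, hx, e1, -, n, hn⟩ := h.exists_rep s t
  have H := H s x ε hx hε
  have e : l t - par l s ε = l (s + x) - l s + Complex.I * ε * deriv l s := by
    rw [e1, par]; ring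
  rw [← e] at H
  have hxn : |x| ≤ ‖(x:ℂ) + Complex.I * ε‖ := by
    simpa using Complex.abs_re_le_norm ((x:ℂ) + Complex.I * ε)
  have h1 : c * |x| ≤ ‖l t - par l s ε‖ := le_trans (by gcongr) H
  have hx' := abs_le.1 hx
  have hn1 : n < 2 := by
    by_contra hh
    have : (2:ℝ) ≤ n := by exact_mod_cast not_lt.1 hh
    nlinarith [hs.1, hs.2, ht.1, ht.2]
  have hn2 : -2 < n := by
    by_contra hh
    have : (n:ℝ) ≤ -2 := by exact_mod_cast not_lt.1 hh
    nlinarith [hs.1, hs.2, ht.1, ht.2]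
  have h3 : x ≠ 0 ∧ ∀ q : ℝ, |x| ^ (-q) ≤ Gk L q s t := by
    have : n = 0 ∨ n = 1 ∨ n = -1 := by omega
    have p1 : ∀ q : ℝ, 0 ≤ |s - t| ^ (-q) := fun q => by positivity
    have p2 : ∀ q : ℝ, 0 ≤ |s - t + L| ^ (-q) := fun q => by positivity
    have p3 : ∀ q : ℝ, 0 ≤ |s - t - L| ^ (-q) := fun q => by positivity
    unfold Gk
    rcases this with rfl | rfl | rfl
    · have : x = -(s - t) := by push_cast at hn; linarith
      rw [this, abs_neg]
      exact ⟨neg_ne_zero.2 hnd.1, fun q => by linarith [p1 q, p2 q, p3 q]⟩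
    · have : x = -(s - t + L) := by push_cast at hn; linarith
      rw [this, abs_neg]
      exact ⟨neg_ne_zero.2 hnd.2.1, fun q => by linarith [p1 q, p2 q, p3 q]⟩
    · have : x = -(s - t - L) := by push_cast at hn; linarith
      rw [this, abs_neg]
      exact ⟨neg_ne_zero.2 hnd.2.2, fun q => by linarith [p1 q, p2 q, p3 q]⟩
  have hxp : 0 < |x| := abs_pos.2 h3.1
  refine ⟨lt_of_lt_of_le (by positivity) h1, fun q hq => ?_⟩
  calc _ ≤ (c * |x|) ^ (-q) := by
        apply Real.rpow_le_rpow_of_nonpos (by positivity) h1 (by linarith)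
    _ = c ^ (-q) * |x| ^ (-q) := Real.mul_rpow hc.le hxp.le
    _ ≤ _ := by gcongr; exact h3.2 q

lemma par_zero (s : ℝ) : par l s 0 = l s := by simp [par]

lemma Q_bound (h : Crv L l) : ∃ C : ℝ≥0∞, C < ⊤ ∧ ∀ z : ℂ,
    ∫⁻ t, ENNReal.ofReal (‖z - l t‖⁻¹) ^ (3/4 : ℝ) ∂(mu L) ≤ C := by
  obtain ⟨c, hc, ε₀, hε₀, H⟩ := h.chord_nd
  obtain ⟨C, hC, HC⟩ := lint_Gk L (q := 3/4) (by norm_num)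
  refine ⟨ENNReal.ofReal ((1/2) ^ (-(3/4) : ℝ) * c ^ (-(3/4) : ℝ)) * C,
    ENNReal.mul_lt_top (by simp) hC, fun z => ?_⟩
  obtain ⟨s, hs, hmin⟩ := h.nearest z
  calc _ ≤ ∫⁻ t, ENNReal.ofReal ((1/2) ^ (-(3/4) : ℝ) * c ^ (-(3/4) : ℝ)) *
        ENNReal.ofReal (Gk L (3/4) s t) ∂(mu L) := by
        apply lintegral_mono_ae
        filter_upwards [ae_mu_mem L, ae_nd L s] with t ht hnd
        obtain ⟨H1, H2⟩ := H s hs t ⟨ht.1.le, ht.2⟩ hnd 0 (by simpa using hε₀.le)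
        rw [par_zero] at H1 H2
        have h1 : (1/2) * ‖l t - l s‖ ≤ ‖z - l t‖ := by
          have := hmin t
          have h2 : ‖l t - l s‖ ≤ ‖l t - z‖ + ‖l s - z‖ := by
            have := norm_sub_le (l t - z) (l s - z)
            simpa using this
          rw [norm_sub_rev z]; linarith
        rw [ENNReal.ofReal_rpow_of_nonneg (by positivity) (by norm_num),
          ← ENNReal.ofReal_mul (by positivity)]
        apply ENNReal.ofReal_le_ofReal
        rw [Real.inv_rpow (norm_nonneg _), ← Real.rpow_neg (norm_nonneg _)]
        calc _ ≤ ((1/2) * ‖l t - l s‖) ^ (-(3/4) : ℝ) := by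
              apply Real.rpow_le_rpow_of_nonpos (by positivity) h1 (by norm_num)
          _ = (1/2) ^ (-(3/4) : ℝ) * ‖l t - l s‖ ^ (-(3/4) : ℝ) :=
              Real.mul_rpow (by norm_num) (norm_nonneg _)
          _ ≤ (1/2) ^ (-(3/4) : ℝ) * (c ^ (-(3/4) : ℝ) * Gk L (3/4) s t) := by
              gcongr; exact H2 _ (by norm_num)
          _ = _ := by ring
    _ ≤ _ := by
        rw [lintegral_const_mul' _ _ (by simp)]
        gcongr; exact HC s hs

/-- the potential kernel -/
noncomputable def X (l : ℝ → ℂ) (z : ℂ) (t : ℝ) : ℝ≥0∞ := ENNReal.ofReal (‖z - l t‖⁻¹)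

lemma X_meas (h : Crv L l) : Measurable (fun p : ℂ × ℝ => X l p.1 p.2) := by
  have := h.cont.measurable
  unfold X; fun_prop

lemma X_meas_right (h : Crv L l) (z : ℂ) : Measurable (X l z) := by
  have := h.cont.measurable
  unfold X; fun_prop

lemma cube_le (h : Crv L l) : ∃ C : ℝ≥0∞, C < ⊤ ∧ ∀ z : ℂ,
    (∫⁻ t, X l z t ∂(mu L)) ^ 3 ≤ C * ∫⁻ t, X l z t ^ (3/2 : ℝ) ∂(mu L) := by
  obtain ⟨C, hC, H⟩ := h.Q_bound
  refine ⟨C ^ 2, by finiteness, fun z => ?_⟩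
  have hm := h.X_meas_right z
  have h1 := ENNReal.lintegral_mul_le_Lp_mul_Lq (mu L) (p := 3) (q := 3/2)
    (by constructor <;> norm_num) (f := fun t => X l z t ^ (1/2 : ℝ))
    (g := fun t => X l z t ^ (1/2 : ℝ)) (by fun_prop) (by fun_prop)
  have e1 : ∀ t, X l z t ^ (1/2 : ℝ) * X l z t ^ (1/2 : ℝ) = X l z t := by
    intro t
    rw [← ENNReal.rpow_add_of_nonneg _ _ (by norm_num) (by norm_num)]
    norm_num
  simp only [Pi.mul_apply, e1, ← ENNReal.rpow_mul] at h1
  norm_num at h1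
  calc _ ≤ ((∫⁻ t, X l z t ^ (3/2 : ℝ) ∂(mu L)) ^ (1/3 : ℝ) *
        (∫⁻ t, X l z t ^ (3/4 : ℝ) ∂(mu L)) ^ (2/3 : ℝ)) ^ 3 := by gcongr
    _ = (∫⁻ t, X l z t ^ (3/2 : ℝ) ∂(mu L)) * (∫⁻ t, X l z t ^ (3/4 : ℝ) ∂(mu L)) ^ 2 := by
        rw [mul_pow, ← ENNReal.rpow_natCast, ← ENNReal.rpow_natCast, ← ENNReal.rpow_mul,
          ← ENNReal.rpow_mul, ← ENNReal.rpow_natCast]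
        norm_num
    _ ≤ (∫⁻ t, X l z t ^ (3/2 : ℝ) ∂(mu L)) * C ^ 2 := by
        gcongr; exact H z
    _ = _ := by ring

lemma lint_cube (h : Crv L l) : ∫⁻ z, (∫⁻ t, X l z t ∂(mu L)) ^ 3 < ⊤ := by
  obtain ⟨M, hM, hb⟩ := bdd_of_periodic h.hL h.cont h.hper
  obtain ⟨C, hC, H⟩ := h.cube_le
  set R := 2 * M with hR
  have hB : MeasurableSet (Metric.ball (0:ℂ) R) := Metric.isOpen_ball.measurableSet
  rw [← lintegral_add_compl _ hB, ENNReal.add_lt_top]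
  constructor
  · set f : ℂ → ℝ≥0∞ := indicator (Metric.ball 0 (R + M))
      (fun x => ENNReal.ofReal (‖x‖⁻¹) ^ (3/2 : ℝ)) with hf
    have hfin : ∫⁻ x, f x < ⊤ := by
      have : IntegrableOn (fun x : ℂ => ‖x‖ ^ (-(3/2) : ℝ)) (Metric.ball 0 (R + M)) := by
        apply integrableOn_ball_of_norm_le_rpow (C := 1) (α := 3/2) (by simp) (by simp; norm_num)
        · refine Eventually.of_forall fun z => ?_
          rw [one_mul, Real.norm_eq_abs, abs_of_nonneg (by positivity)]
        · apply Measurable.aestronglyMeasurable; fun_prop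
      rw [hf, lintegral_indicator Metric.isOpen_ball.measurableSet]
      refine lt_of_eq_of_lt ?_ this.lintegral_lt_top
      congr 1; funext x
      rw [ENNReal.ofReal_rpow_of_nonneg (by positivity) (by norm_num),
        Real.inv_rpow (norm_nonneg _), ← Real.rpow_neg (norm_nonneg _)]
    calc _ ≤ ∫⁻ z in Metric.ball (0:ℂ) R, C * ∫⁻ t, X l z t ^ (3/2 : ℝ) ∂(mu L) :=
          lintegral_mono H
      _ = C * ∫⁻ z in Metric.ball (0:ℂ) R, ∫⁻ t, X l z t ^ (3/2 : ℝ) ∂(mu L) :=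
          lintegral_const_mul' _ _ hC.ne
      _ = C * ∫⁻ t, (∫⁻ z in Metric.ball (0:ℂ) R, X l z t ^ (3/2 : ℝ)) ∂(mu L) := by
          rw [lintegral_lintegral_swap]
          exact ((h.X_meas).pow_const _).aemeasurable
      _ ≤ C * ∫⁻ t, (∫⁻ x, f x) ∂(mu L) := by
          refine mul_le_mul_right (lintegral_mono fun t => ?_) _
          rw [← lintegral_sub_right_eq_self f (l t), ← lintegral_indicator hB]
          apply lintegral_mono
          intro z
          by_cases hz : z ∈ Metric.ball (0:ℂ) R
          · rw [indicator_of_mem hz]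
            show _ ≤ f (z - l t)
            rw [hf, indicator_of_mem]
            · rfl
            · rw [mem_ball_zero_iff] at hz ⊢
              exact (norm_sub_le _ _).trans_lt (by linarith [hb t])
          · simp [indicator_of_notMem hz]
      _ = C * ((∫⁻ x, f x) * (mu L) univ) := by simp
      _ < ⊤ := ENNReal.mul_lt_top hC (ENNReal.mul_lt_top hfin (measure_lt_top _ _))
  · have hIntg : IntegrableOn (fun z : ℂ => ‖z‖ ^ (-3 : ℝ)) (Metric.ball (0:ℂ) R)ᶜ := by
      have h0 : Integrable (fun z : ℂ => (1 + ‖z‖) ^ (-3 : ℝ)) :=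
        integrable_one_add_norm (by simp; norm_num)
      refine ((h0.const_mul ((1 + 1/R) ^ (3:ℝ))).integrableOn).mono' ?_ ?_
      · apply Measurable.aestronglyMeasurable; fun_prop
      · filter_upwards [ae_restrict_mem hB.compl] with z hz
        have hz : R ≤ ‖z‖ := by simpa using hz
        have hRp : 0 < R := by positivity
        have hzp : 0 < ‖z‖ := by linarith
        have h1 : 1 + ‖z‖ ≤ (1 + 1/R) * ‖z‖ := by
          have : 1 ≤ 1 / R * ‖z‖ := by rw [one_div_mul_eq_div, le_div_iff₀ hRp]; linarith
          linarith
        rw [Real.norm_eq_abs, abs_of_nonneg (by positivity)]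
        have h2 := Real.rpow_le_rpow_of_nonpos (z := -3) (by positivity) h1 (by norm_num)
        rw [Real.mul_rpow (by positivity) hzp.le, Real.rpow_neg (by positivity),
          inv_mul_le_iff₀ (by positivity)] at h2
        exact h2
    calc _ ≤ ∫⁻ z in (Metric.ball (0:ℂ) R)ᶜ,
          (2 * mu L univ) ^ 3 * ENNReal.ofReal (‖z‖ ^ (-3 : ℝ)) := by
          apply lintegral_mono_ae
          filter_upwards [ae_restrict_mem hB.compl] with z hz
          have hz : R ≤ ‖z‖ := by simpa using hz
          have hzp : 0 < ‖z‖ := by linarith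
          have h1 : ∀ t, X l z t ≤ 2 * ENNReal.ofReal (‖z‖⁻¹) := by
            intro t
            unfold X
            rw [← ENNReal.ofReal_ofNat 2, ← ENNReal.ofReal_mul (by norm_num)]
            apply ENNReal.ofReal_le_ofReal
            have h2 := norm_sub_norm_le z (l t)
            have h3 := hb t
            rw [← div_eq_mul_inv, ← inv_div]
            apply inv_anti₀ (by positivity)
            linarith
          have h4 : ENNReal.ofReal (‖z‖ ^ (-3 : ℝ)) = ENNReal.ofReal (‖z‖⁻¹) ^ 3 := by
            rw [← ENNReal.ofReal_pow (by positivity), Real.rpow_neg hzp.le, inv_pow]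
            norm_num
          rw [h4, ← mul_pow]
          gcongr
          calc _ ≤ ∫⁻ t, 2 * ENNReal.ofReal (‖z‖⁻¹) ∂(mu L) := lintegral_mono h1
            _ = _ := by simp; ring
      _ = (2 * mu L univ) ^ 3 * ∫⁻ z in (Metric.ball (0:ℂ) R)ᶜ, ENNReal.ofReal (‖z‖ ^ (-3 : ℝ)) := by
          apply lintegral_const_mul'; finiteness
      _ < ⊤ := by
          apply ENNReal.mul_lt_top
          · finiteness
          · exact hIntg.lintegral_lt_top

/-- fourfold integrability -/
lemma integrable4 (h : Crv L l) {g : (ℝ × ℝ × ℝ) × ℂ → ℂ} (hg : Measurable g) {C : ℝ}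
    (hC : ∀ s t t' z, ‖g ((s, t, t'), z)‖ ≤ C * (‖z - l s‖⁻¹ * (‖z - l t‖⁻¹ * ‖z - l t'‖⁻¹))) :
    Integrable g (((mu L).prod ((mu L).prod (mu L))).prod volume) := by
  refine ⟨hg.aestronglyMeasurable, ?_⟩
  have hl := h.cont.measurable
  have hXm := h.X_meas_right
  rw [hasFiniteIntegral_iff_norm, lintegral_prod_symm _ (by fun_prop)]
  calc _ ≤ ∫⁻ z, ENNReal.ofReal C * (∫⁻ t, X l z t ∂(mu L)) ^ 3 := by
        gcongr with z
        calc _ ≤ ∫⁻ p : ℝ × ℝ × ℝ, ENNReal.ofReal C * (X l z p.1 * (X l z p.2.1 * X l z p.2.2))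
              ∂((mu L).prod ((mu L).prod (mu L))) := by
              apply lintegral_mono
              rintro ⟨s, t, t'⟩
              simp only
              refine (ENNReal.ofReal_le_ofReal (hC s t t' z)).trans ?_
              by_cases hC0 : 0 ≤ C
              · rw [ENNReal.ofReal_mul hC0, ENNReal.ofReal_mul (by positivity),
                  ENNReal.ofReal_mul (by positivity)]; rfl
              · rw [ENNReal.ofReal_of_nonpos]
                · simp
                · apply mul_nonpos_of_nonpos_of_nonneg (by linarith) (by positivity)
          _ = _ := by
              rw [lintegral_const_mul' _ _ (by simp)]
              have e1 := lintegral_prod_mul (μ := mu L) (ν := mu L) (hXm z).aemeasurable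
                (hXm z).aemeasurable
              have e2 := lintegral_prod_mul (μ := mu L) (ν := (mu L).prod (mu L))
                (f := X l z) (g := fun p : ℝ × ℝ => X l z p.1 * X l z p.2) (hXm z).aemeasurable
                (by have := hXm z; fun_prop)
              rw [e2, e1]; ring
    _ = ENNReal.ofReal C * ∫⁻ z, (∫⁻ t, X l z t ∂(mu L)) ^ 3 := lintegral_const_mul' _ _ (by simp)
    _ < ⊤ := ENNReal.mul_lt_top (by simp) h.lint_cube

end Crv

lemma abs_log_le {r : ℝ} (hr : 0 < r) : |log r| ≤ r + 2 * r ^ (-(1/2) : ℝ) := by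
  have hp : 0 < r ^ (-(1/2) : ℝ) := by positivity
  rw [abs_le]; constructor
  · have h1 := Real.log_le_sub_one_of_pos hp
    rw [Real.log_rpow hr] at h1
    linarith
  · have := Real.log_le_sub_one_of_pos hr
    linarith

/-- bounded measurable functions -/
def BM (f : ℝ → ℝ) : Prop := Measurable f ∧ ∃ M, ∀ t, |f t| ≤ M

/-- the logarithmic kernel -/
noncomputable def ll (l : ℝ → ℂ) (s t : ℝ) : ℝ := log ‖l s - l t‖

/-- the logarithmic energy form -/
noncomputable def PP (L : ℝ) (l : ℝ → ℂ) (a b : ℝ → ℝ) : ℝ :=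
  ∫ p : ℝ × ℝ, a p.1 * b p.2 * ll l p.1 p.2 ∂((mu L).prod (mu L))

/-- Cauchy transform -/
noncomputable def fC (L : ℝ) (l : ℝ → ℂ) (a : ℝ → ℝ) (z : ℂ) : ℂ :=
  ∫ t, (a t : ℂ) / (z - l t) ∂(mu L)

/-- integrand of the fourfold integral -/
noncomputable def FF (l : ℝ → ℂ) (a b : ℝ → ℝ) (c : ℝ × ℝ → ℂ) (p : (ℝ × ℝ × ℝ) × ℂ) : ℂ :=
  (a p.1.2.1 : ℂ) * b p.1.2.2 * c (p.1.1, p.1.2.1) *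
    (1 / ((p.2 - l p.1.2.1) * (p.2 - l p.1.1) * starRingEnd ℂ (p.2 - l p.1.2.2)))

namespace Crv
variable {L : ℝ} {l : ℝ → ℂ}

lemma ae_ne (h : Crv L l) (s : ℝ) : ∀ᵐ t ∂(mu L), l s ≠ l t := by
  unfold mu
  rw [ae_restrict_iff' measurableSet_Ioc, ae_iff]
  apply Set.Subsingleton.measure_zero
  have key : ∀ t ∈ Ioc 0 L, ∀ t' ∈ Ioc 0 L, l s = l t → l s = l t' → ¬ t < t' := by
    intro t ht t' ht' e e' hlt
    have := h.eq_imp (s := t) (x := t' - t) (by linarith) (by linarith [ht.1, ht'.2])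
    apply this
    rw [show t + (t' - t) = t' by ring, ← e, ← e']
  intro t ht t' ht'
  simp only [mem_ofPred_eq, Classical.not_imp, not_not] at ht ht'
  rcases lt_trichotomy t t' with H | H | H
  · exact absurd H (key _ ht.1 _ ht'.1 ht.2 ht'.2)
  · exact H
  · exact absurd H (key _ ht'.1 _ ht.1 ht'.2 ht.2)

lemma ll_meas (h : Crv L l) : Measurable (fun p : ℝ × ℝ => ll l p.1 p.2) := by
  have := h.cont.measurable
  unfold ll
  fun_prop

lemma ll_integrable (h : Crv L l) :
    Integrable (fun p : ℝ × ℝ => ll l p.1 p.2) ((mu L).prod (mu L)) := by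
  obtain ⟨c, hc, ε₀, hε₀, H⟩ := h.chord_nd
  obtain ⟨M, hM, hb⟩ := bdd_of_periodic h.hL h.cont h.hper
  have hi := Gk_integrable L (q := 1/2) (by norm_num)
  refine Integrable.mono' ((integrable_const (2 * M)).add (hi.const_mul (2 * c ^ (-(1/2) : ℝ))))
    h.ll_meas.aestronglyMeasurable ?_
  have hS : MeasurableSet {p : ℝ × ℝ | ‖ll l p.1 p.2‖ ≤
      ((fun _ : ℝ × ℝ => 2 * M) + fun p : ℝ × ℝ => 2 * c ^ (-(1/2) : ℝ) * Gk L (1/2) p.1 p.2) p} := by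
    apply measurableSet_le
    · exact h.ll_meas.norm
    · have := Gk_meas L (1/2)
      exact measurable_const.add (this.const_mul _)
  rw [Measure.ae_prod_iff_ae_ae hS]
  filter_upwards [ae_mu_mem L] with s hs
  filter_upwards [ae_mu_mem L, ae_nd L s] with t ht hnd
  obtain ⟨H1, H2⟩ := H s ⟨hs.1.le, hs.2⟩ t ⟨ht.1.le, ht.2⟩ hnd 0 (by simpa using hε₀.le)
  rw [par_zero, norm_sub_rev] at H1
  have H2 := H2 (1/2) (by norm_num)
  rw [par_zero, norm_sub_rev] at H2
  simp only [Pi.add_apply, ll, Real.norm_eq_abs]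
  have := abs_log_le H1
  have h3 : ‖l s - l t‖ ≤ 2 * M := (norm_sub_le _ _).trans (by linarith [hb s, hb t])
  linarith

lemma w_integrable (h : Crv L l) {w : ℝ × ℝ → ℝ} (hw : Measurable w) {C : ℝ} (hC : ∀ p, |w p| ≤ C) :
    Integrable (fun p : ℝ × ℝ => w p * ll l p.1 p.2) ((mu L).prod (mu L)) :=
  h.ll_integrable.bdd_mul hw.aestronglyMeasurable (Eventually.of_forall hC)

lemma PP_integrable (h : Crv L l) {a b : ℝ → ℝ} (ha : BM a) (hb : BM b) :
    Integrable (fun p : ℝ × ℝ => a p.1 * b p.2 * ll l p.1 p.2) ((mu L).prod (mu L)) := by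
  obtain ⟨ham, Ma, hMa⟩ := ha
  obtain ⟨hbm, Mb, hMb⟩ := hb
  refine h.w_integrable (w := fun p => a p.1 * b p.2) (by fun_prop) (C := Ma * Mb) fun p => ?_
  rw [abs_mul]
  exact mul_le_mul (hMa _) (hMb _) (abs_nonneg _) ((abs_nonneg _).trans (hMa p.1))

lemma PP_symm (a b : ℝ → ℝ) : PP L l a b = PP L l b a := by
  unfold PP
  rw [← integral_prod_swap]
  congr 1; funext p
  simp only [Prod.fst_swap, Prod.snd_swap, ll]
  rw [norm_sub_rev]; ring

lemma ae3 (h : Crv L l) : ∀ᵐ p : ℝ × ℝ × ℝ ∂((mu L).prod ((mu L).prod (mu L))),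
    l p.1 ≠ l p.2.1 ∧ l p.2.1 ≠ l p.2.2 ∧ l p.1 ≠ l p.2.2 := by
  have hl := h.cont
  have o1 : IsOpen {p : ℝ × ℝ × ℝ | l p.1 ≠ l p.2.1} := isOpen_ne_fun (by fun_prop) (by fun_prop)
  have o2 : IsOpen {p : ℝ × ℝ × ℝ | l p.2.1 ≠ l p.2.2} := isOpen_ne_fun (by fun_prop) (by fun_prop)
  have o3 : IsOpen {p : ℝ × ℝ × ℝ | l p.1 ≠ l p.2.2} := isOpen_ne_fun (by fun_prop) (by fun_prop)
  have o : IsOpen {p : ℝ × ℝ × ℝ | l p.1 ≠ l p.2.1 ∧ l p.2.1 ≠ l p.2.2 ∧ l p.1 ≠ l p.2.2} :=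
    o1.inter (o2.inter o3)
  rw [Measure.ae_prod_iff_ae_ae o.measurableSet]
  refine Eventually.of_forall fun s => ?_
  have o' : IsOpen {p : ℝ × ℝ | l s ≠ l p.1 ∧ l p.1 ≠ l p.2 ∧ l s ≠ l p.2} :=
    o.preimage (f := fun p : ℝ × ℝ => (s, p)) (by fun_prop)
  rw [Measure.ae_prod_iff_ae_ae o'.measurableSet]
  filter_upwards [h.ae_ne s] with t ht
  filter_upwards [h.ae_ne s, h.ae_ne t] with t' h1 h2
  exact ⟨ht, h2, h1⟩

lemma core (h : Crv L l) {a b Aa : ℝ → ℝ} (ha : BM a) (hb : BM b) (hAa : BM Aa)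
    {c : ℝ × ℝ → ℂ} (hcm : Measurable c) {C : ℝ} (hC : ∀ p, ‖c p‖ ≤ C)
    {k : ℝ × ℝ → ℝ} (hkm : Measurable k) {Ck : ℝ} (hCk : ∀ p, |k p| ≤ Ck)
    (hk : ∀ s t, l s ≠ l t → k (s, t) = (c (s, t) * (2 * π / (l t - l s))).re)
    {κ : ℝ} (hκ : ∀ t, ∫ s, k (s, t) ∂(mu L) = κ)
    (hA : ∀ s, ∫ t, k (s, t) * a t ∂(mu L) = Aa s) :
    Integrable (fun z => ∫ p, FF l a b c (p, z) ∂((mu L).prod ((mu L).prod (mu L)))) ∧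
    (∫ z, ∫ p, FF l a b c (p, z) ∂((mu L).prod ((mu L).prod (mu L)))).re =
      PP L l Aa b - κ * PP L l a b := by
  obtain ⟨ham, Ma, hMa⟩ := id ha
  obtain ⟨hbm, Mb, hMb⟩ := id hb
  have hlm := h.cont.measurable
  have hMa0 : 0 ≤ Ma := (abs_nonneg _).trans (hMa 0)
  have hMb0 : 0 ≤ Mb := (abs_nonneg _).trans (hMb 0)
  have hC0 : 0 ≤ C := (norm_nonneg _).trans (hC 0)
  have hCk0 : 0 ≤ Ck := (abs_nonneg _).trans (hCk 0)
  set F0 : (ℝ × ℝ × ℝ) × ℂ → ℂ := fun p =>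
    1 / ((p.2 - l p.1.2.1) * (p.2 - l p.1.1) * starRingEnd ℂ (p.2 - l p.1.2.2)) with hF0
  have hF0m : Measurable F0 := by
    have : Measurable (starRingEnd ℂ) := Complex.continuous_conj.measurable
    rw [hF0]; fun_prop
  have hF0n : ∀ s t t' z, ‖F0 ((s, t, t'), z)‖ = ‖z - l s‖⁻¹ * (‖z - l t‖⁻¹ * ‖z - l t'‖⁻¹) := by
    intro s t t' z
    simp only [hF0, one_div, norm_inv, norm_mul, RCLike.norm_conj, mul_inv]
    ring
  have hI0 : Integrable F0 (((mu L).prod ((mu L).prod (mu L))).prod volume) :=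
    h.integrable4 hF0m (C := 1) (fun s t t' z => by rw [hF0n, one_mul])
  have hFm : Measurable (FF l a b c) := by
    have : FF l a b c = fun p => (a p.1.2.1 : ℂ) * b p.1.2.2 * c (p.1.1, p.1.2.1) * F0 p := rfl
    rw [this]; fun_prop
  have hI : Integrable (FF l a b c) (((mu L).prod ((mu L).prod (mu L))).prod volume) := by
    refine h.integrable4 hFm (C := Ma * Mb * C) (fun s t t' z => ?_)
    have : FF l a b c ((s, t, t'), z) = (a t : ℂ) * b t' * c (s, t) * F0 ((s, t, t'), z) := rfl
    rw [this, norm_mul, hF0n, norm_mul, norm_mul, Complex.norm_real, Complex.norm_real]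
    gcongr
    · exact hMa t
    · exact hMb t'
    · exact hC _
  refine ⟨hI.integral_prod_right, ?_⟩
  rw [← integral_prod_symm _ hI, integral_prod _ hI]
  set g1 : ℝ × ℝ × ℝ → ℝ := fun p => (k (p.1, p.2.1) * a p.2.1) * (b p.2.2 * ll l p.1 p.2.2) with hg1
  set g2 : ℝ × ℝ × ℝ → ℝ := fun p => k (p.1, p.2.1) * (a p.2.1 * b p.2.2 * ll l p.2.1 p.2.2) with hg2
  have hI2 : Integrable g2 ((mu L).prod ((mu L).prod (mu L))) := by
    have := (h.PP_integrable ha hb).comp_snd (mu L)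
    exact this.bdd_mul (c := Ck) (f := fun p : ℝ × ℝ × ℝ => k (p.1, p.2.1))
      (Measurable.aestronglyMeasurable (by fun_prop))
      (Eventually.of_forall fun p => hCk _)
  have hcalc : ∀ᵐ p : ℝ × ℝ × ℝ ∂((mu L).prod ((mu L).prod (mu L))),
      (∫ z, FF l a b c (p, z)).re = g1 p - g2 p := by
    filter_upwards [h.ae3, hI0.prod_right_ae] with p hp hip
    obtain ⟨h1, h2, h3⟩ := hp
    have e : ∫ z, FF l a b c (p, z) = (a p.2.1 : ℂ) * b p.2.2 * c (p.1, p.2.1) * ∫ z, F0 (p, z) := by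
      rw [← integral_const_mul]; rfl
    have e2 := planar (a := l p.2.1) (b := l p.2.2) (c := l p.1) h2 h3 h1.symm hip
    have e3 : ∫ z, F0 (p, z) = (2 * π / (l p.2.1 - l p.1)) *
      ((log ‖l p.1 - l p.2.2‖ - log ‖l p.2.1 - l p.2.2‖ : ℝ) : ℂ) := e2
    rw [e, e3]
    have e4 : (a p.2.1 : ℂ) * b p.2.2 * c (p.1, p.2.1) * ((2 * π / (l p.2.1 - l p.1)) *
      ((log ‖l p.1 - l p.2.2‖ - log ‖l p.2.1 - l p.2.2‖ : ℝ) : ℂ)) =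
      ((a p.2.1 * b p.2.2 * (log ‖l p.1 - l p.2.2‖ - log ‖l p.2.1 - l p.2.2‖) : ℝ) : ℂ) *
       (c (p.1, p.2.1) * (2 * π / (l p.2.1 - l p.1))) := by
      push_cast; ring
    rw [e4, Complex.re_ofReal_mul, ← hk _ _ h1, hg1, hg2]
    simp only [ll]
    ring
  have hI' := hI.integral_prod_left
  have hIre : Integrable (fun p => (∫ z, FF l a b c (p, z)).re)
    ((mu L).prod ((mu L).prod (mu L))) := hI'.re
  have hI12 : Integrable (fun p => g1 p - g2 p) ((mu L).prod ((mu L).prod (mu L))) :=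
    hIre.congr hcalc
  have hI1 : Integrable g1 ((mu L).prod ((mu L).prod (mu L))) := by
    have := hI12.add hI2
    refine this.congr (Eventually.of_forall fun p => by simp)
  have e0 : (∫ p, ∫ z, FF l a b c (p, z) ∂volume ∂((mu L).prod ((mu L).prod (mu L)))).re =
      ∫ p, (∫ z, FF l a b c (p, z)).re ∂((mu L).prod ((mu L).prod (mu L))) :=
    (integral_re hI').symm
  rw [e0, integral_congr_ae hcalc, integral_sub hI1 hI2]
  congr 1
  · rw [integral_prod _ hI1, PP, integral_prod _ (h.PP_integrable hAa hb)]
    congr 1; funext s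
    have : ∀ t', Aa s * b t' * ll l s t' = Aa s * (b t' * ll l s t') := fun t' => by ring
    simp only [hg1, this]
    rw [integral_prod_mul (fun t => k (s, t) * a t) (fun t' => b t' * ll l s t'), hA,
      integral_const_mul]
  · rw [integral_prod_symm _ hI2, PP, ← integral_const_mul]
    congr 1; funext p
    simp only [hg2]
    rw [integral_mul_const, hκ]

lemma curve_null (h : Crv L l) : ∀ᵐ z : ℂ, ∀ t, l t ≠ z := by
  have : volume (range l) = 0 := by
    have h0 : volume ((LinearMap.ker Complex.imLm : Submodule ℝ ℂ) : Set ℂ) = 0 := by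
      apply Measure.addHaar_submodule
      intro hh
      have : Complex.I ∈ LinearMap.ker Complex.imLm := by rw [hh]; trivial
      simp at this
    have hdl : Differentiable ℝ l := fun s => (h.hd s).differentiableAt
    have h1 := addHaar_image_eq_zero_of_differentiableOn_of_addHaar_eq_zero volume
      (f := fun z : ℂ => l z.re) (s := ((LinearMap.ker Complex.imLm : Submodule ℝ ℂ) : Set ℂ))
      (fun z _ => ((hdl z.re).comp z Complex.reCLM.differentiableAt).differentiableWithinAt) h0
    refine measure_mono_null ?_ h1
    rintro _ ⟨t, rfl⟩
    exact ⟨(t : ℂ), by simp, by simp⟩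
  rw [← compl_mem_ae_iff] at this
  filter_upwards [this] with z hz t ht
  exact hz ⟨t, ht⟩

lemma conj_fC (b : ℝ → ℝ) (z : ℂ) :
    ∫ t, (b t : ℂ) / starRingEnd ℂ (z - l t) ∂(mu L) = starRingEnd ℂ (fC L l b z) := by
  unfold fC
  rw [← integral_conj]
  congr 1; funext t
  rw [map_div₀, Complex.conj_ofReal]

lemma div_int (h : Crv L l) {a : ℝ → ℝ} (ha : Continuous a) {z : ℂ} (hz : ∀ t, l t ≠ z) :
    Integrable (fun t => (a t : ℂ) / (z - l t)) (mu L) := by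
  have hl := h.cont
  have : Continuous (fun t => (a t : ℂ) / (z - l t)) :=
    Continuous.div (by fun_prop) (by fun_prop) (fun t => sub_ne_zero.2 (hz t).symm)
  exact (this.integrableOn_Icc (a := 0) (b := L)).mono_set Ioc_subset_Icc_self

lemma conj_int (h : Crv L l) {a : ℝ → ℝ} (ha : Continuous a) {z : ℂ} (hz : ∀ t, l t ≠ z) :
    Integrable (fun t => (a t : ℂ) / starRingEnd ℂ (z - l t)) (mu L) := by
  have hl := h.cont
  have : Continuous (fun t => (a t : ℂ) / starRingEnd ℂ (z - l t)) :=
    Continuous.div (by fun_prop) (Complex.continuous_conj.comp (by fun_prop))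
      (fun t => (map_ne_zero _).2 (sub_ne_zero.2 (hz t).symm))
  exact (this.integrableOn_Icc (a := 0) (b := L)).mono_set Ioc_subset_Icc_self

lemma BM_of (h : Crv L l) {a : ℝ → ℝ} (ha : Continuous a) (hp : ∀ x, a (x + L) = a x) : BM a := by
  obtain ⟨M, -, hM⟩ := bdd_of_periodic (g := fun x => (a x : ℂ)) h.hL (by fun_prop)
    (fun x => by simp only [hp])
  exact ⟨ha.measurable, M, fun t => by simpa using hM t⟩

lemma mu_univ (h : Crv L l) : (mu L).real univ = L := by
  simp [mu, h.hL.le]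

lemma Tform (h : Crv L l) {a b : ℝ → ℝ} (hac : Continuous a) (hap : ∀ x, a (x + L) = a x)
    (hbc : Continuous b) (hbp : ∀ x, b (x + L) = b x) (hmean : ∫ t, a t ∂(mu L) = 0) :
    Integrable (fun z => fC L l a z * starRingEnd ℂ (fC L l b z)) ∧
    (∫ z, fC L l a z * starRingEnd ℂ (fC L l b z)).re = - (2 * π) * PP L l a b := by
  obtain ⟨M, hM, hMb⟩ := bdd_of_periodic h.hL h.cont h.hper
  have hlm := h.cont.measurable
  have hl := h.cont
  have hL := h.hL
  have hpi : (π : ℂ) ≠ 0 := by exact_mod_cast pi_ne_zero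
  have key := h.core (a := a) (b := b) (Aa := fun _ => 0) (h.BM_of hac hap) (h.BM_of hbc hbp)
    ⟨measurable_const, 0, fun _ => by simp⟩ (c := fun p => (l p.2 - l p.1) / (2 * π)) (by fun_prop)
    (C := (2 * M) / (2 * π)) (fun p => by
      rw [norm_div, norm_mul, Complex.norm_real, Real.norm_eq_abs, abs_of_pos pi_pos]
      have : ‖l p.2 - l p.1‖ ≤ 2 * M := (norm_sub_le _ _).trans (by linarith [hMb p.1, hMb p.2])
      simp only [Complex.norm_ofNat]
      gcongr)
    (k := fun _ => 1) measurable_const (Ck := 1) (fun _ => by simp)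
    (fun s t hst => by
      have : l t - l s ≠ 0 := sub_ne_zero.2 hst.symm
      have : (l t - l s) / (2 * π) * (2 * π / (l t - l s)) = 1 := by field_simp
      simp only [this, Complex.one_re])
    (κ := L) (fun t => by simp [h.mu_univ]) (fun s => by simpa using hmean)
  have e : ∀ᵐ z : ℂ, ∫ p, FF l a b (fun p => (l p.2 - l p.1) / (2 * π)) (p, z)
      ∂((mu L).prod ((mu L).prod (mu L))) =
      (L / (2 * π) : ℂ) * (fC L l a z * starRingEnd ℂ (fC L l b z)) := by
    filter_upwards [h.curve_null] with z hz
    have e1 : ∀ p : ℝ × ℝ × ℝ, FF l a b (fun p => (l p.2 - l p.1) / (2 * π)) (p, z) =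
        (1 / (2 * π) : ℂ) * ((a p.2.1 : ℂ) / (z - l p.2.1) *
            ((b p.2.2 : ℂ) / starRingEnd ℂ (z - l p.2.2))) -
        (1 / (2 * π) : ℂ) * (((1:ℝ) : ℂ) / (z - l p.1)) * ((a p.2.1 : ℂ) *
            ((b p.2.2 : ℂ) / starRingEnd ℂ (z - l p.2.2))) := by
      intro p
      have h1 : z - l p.1 ≠ 0 := sub_ne_zero.2 (hz _).symm
      have h2 : z - l p.2.1 ≠ 0 := sub_ne_zero.2 (hz _).symm
      have h3 : starRingEnd ℂ (z - l p.2.2) ≠ 0 := (map_ne_zero _).2 (sub_ne_zero.2 (hz _).symm)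
      simp only [FF]
      field_simp
      push_cast
      ring
    simp only [e1]
    have ia : Integrable (fun t => (a t : ℂ)) (mu L) := by
      have : Continuous (fun t => (a t : ℂ)) := by fun_prop
      exact (this.integrableOn_Icc (a := 0) (b := L)).mono_set Ioc_subset_Icc_self
    have i1 := (h.div_int hac hz).mul_prod (h.conj_int hbc hz)
    have i2 := (integrable_const (1 / (2 * π) : ℂ) (μ := mu L)).mul_prod i1
    have i3 := ((h.div_int (a := fun _ => 1) continuous_const hz).const_mul
      (1 / (2 * π) : ℂ)).mul_prod (ia.mul_prod (h.conj_int hbc hz))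
    rw [integral_sub i2 i3]
    have j2 := integral_prod_mul (μ := mu L) (ν := (mu L).prod (mu L)) (fun _ => (1 / (2 * π) : ℂ))
      (fun p : ℝ × ℝ => (a p.1 : ℂ) / (z - l p.1) * ((b p.2 : ℂ) / starRingEnd ℂ (z - l p.2)))
    have j3 := integral_prod_mul (μ := mu L) (ν := (mu L).prod (mu L))
      (fun s => (1 / (2 * π) : ℂ) * (((1:ℝ) : ℂ) / (z - l s)))
      (fun p : ℝ × ℝ => (a p.1 : ℂ) * ((b p.2 : ℂ) / starRingEnd ℂ (z - l p.2)))
    have j4 := integral_prod_mul (μ := mu L) (ν := mu L) (fun t => (a t : ℂ) / (z - l t))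
      (fun t => (b t : ℂ) / starRingEnd ℂ (z - l t))
    have j5 := integral_prod_mul (μ := mu L) (ν := mu L) (fun t => (a t : ℂ))
      (fun t => (b t : ℂ) / starRingEnd ℂ (z - l t))
    rw [j2, j3, j4, j5, conj_fC, integral_complex_ofReal, hmean]
    simp only [integral_const, h.mu_univ, Complex.ofReal_zero, zero_mul, mul_zero, sub_zero, fC,
      Complex.real_smul]
    ring
  obtain ⟨k1, k2⟩ := key
  have k1 := k1.congr e
  rw [integral_congr_ae e, integral_const_mul] at k2
  have hLc : (L : ℂ) ≠ 0 := by exact_mod_cast hL.ne'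
  refine ⟨?_, ?_⟩
  · have := k1.const_mul (2 * π / L : ℂ)
    refine this.congr (Eventually.of_forall fun z => ?_)
    simp only
    field_simp
  · have e2 : (L / (2 * π) : ℂ) = ((L / (2 * π) : ℝ) : ℂ) := by push_cast; rfl
    rw [e2, Complex.re_ofReal_mul] at k2
    have e3 : PP L l (fun _ => 0) b = 0 := by simp [PP]
    rw [e3] at k2
    field_simp at k2
    apply mul_left_cancel₀ hL.ne'
    linarith

lemma Bform (h : Crv L l) (hW : ∀ s, ∫ t in (0:ℝ)..L, (deriv l t / (l t - l s)).im = π)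
    {a b Aa : ℝ → ℝ} (hac : Continuous a) (hap : ∀ x, a (x + L) = a x)
    (hbc : Continuous b) (hbp : ∀ x, b (x + L) = b x)
    (hAc : Continuous Aa) (hAp : ∀ x, Aa (x + L) = Aa x)
    (hA : ∀ s, ∫ t, (deriv l s / (l s - l t)).im * a t ∂(mu L) = Aa s) :
    Integrable (fun z => wnd L l z / (2 * π * Complex.I) *
      (fC L l a z * starRingEnd ℂ (fC L l b z))) ∧
    (∫ z, wnd L l z / (2 * π * Complex.I) * (fC L l a z * starRingEnd ℂ (fC L l b z))).re =
      PP L l Aa b - π * PP L l a b := by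
  have hlm := h.cont.measurable
  have hdm := h.dcont.measurable
  have hpi : (π : ℂ) ≠ 0 := by exact_mod_cast pi_ne_zero
  obtain ⟨C, hC, hK⟩ := h.K_bdd
  have key := h.core (a := a) (b := b) (Aa := Aa) (h.BM_of hac hap) (h.BM_of hbc hbp)
    (h.BM_of hAc hAp) (c := fun p => - deriv l p.1 / (2 * π * Complex.I)) (by fun_prop)
    (C := 1 / (2 * π)) (fun p => by
      rw [norm_div, norm_mul, norm_mul, Complex.norm_real, Real.norm_eq_abs, abs_of_pos pi_pos,
        norm_neg, h.harc]
      simp)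
    (k := fun p => (deriv l p.1 / (l p.1 - l p.2)).im) (Complex.measurable_im.comp (by fun_prop))
    (Ck := C) (fun p => hK _ _)
    (fun s t hst => by
      have h1 : l t - l s ≠ 0 := sub_ne_zero.2 hst.symm
      have h2 : l s - l t ≠ 0 := sub_ne_zero.2 hst
      have : - deriv l s / (2 * π * Complex.I) * (2 * π / (l t - l s)) =
          -Complex.I * (deriv l s / (l s - l t)) := by
        rw [show l t - l s = - (l s - l t) by ring]
        have hI := Complex.I_ne_zero
        field_simp
        rw [Complex.I_sq]; ring
      simp only [this]
      simp)
    (κ := π) (fun t => by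
      rw [← hW t, intervalIntegral.integral_of_le h.hL.le]; rfl) hA
  have e : ∀ z : ℂ, ∫ p, FF l a b (fun p => - deriv l p.1 / (2 * π * Complex.I)) (p, z)
      ∂((mu L).prod ((mu L).prod (mu L))) =
      wnd L l z / (2 * π * Complex.I) * (fC L l a z * starRingEnd ℂ (fC L l b z)) := by
    intro z
    have e1 : ∀ p : ℝ × ℝ × ℝ, FF l a b (fun p => - deriv l p.1 / (2 * π * Complex.I)) (p, z) =
        (deriv l p.1 / (l p.1 - z) / (2 * π * Complex.I)) * ((a p.2.1 : ℂ) / (z - l p.2.1) *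
            ((b p.2.2 : ℂ) / starRingEnd ℂ (z - l p.2.2))) := by
      intro p
      simp only [FF]
      rw [show l p.1 - z = - (z - l p.1) by ring]
      simp only [div_eq_mul_inv, mul_inv, inv_neg]
      ring
    simp only [e1]
    have j2 := integral_prod_mul (μ := mu L) (ν := (mu L).prod (mu L))
      (fun s => (deriv l s / (l s - z) / (2 * π * Complex.I)))
      (fun p : ℝ × ℝ => (a p.1 : ℂ) / (z - l p.1) * ((b p.2 : ℂ) / starRingEnd ℂ (z - l p.2)))
    have j4 := integral_prod_mul (μ := mu L) (ν := mu L) (fun t => (a t : ℂ) / (z - l t))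
      (fun t => (b t : ℂ) / starRingEnd ℂ (z - l t))
    rw [j2, j4, conj_fC, integral_div, wnd, intervalIntegral.integral_of_le h.hL.le]
    rfl
  simp only [e] at key
  exact key

end Crv

lemma hasDerivAt_log_norm {w : ℝ → ℂ} {w' : ℂ} {r : ℝ} (hw : HasDerivAt w w' r) (h0 : w r ≠ 0) :
    HasDerivAt (fun r => log ‖w r‖) (w' / w r).re r := by
  have h1 := (hw.norm_sq).log (by have := norm_pos_iff.2 h0; positivity)
  have h2 := h1.div_const 2
  have e : (fun r => log ‖w r‖) = fun r => log (‖w r‖ ^ 2) / 2 := by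
    funext r; rw [Real.log_pow]; push_cast; ring
  rw [e]
  refine h2.congr_deriv ?_
  have hn : ‖w r‖ ^ 2 ≠ 0 := by have := norm_pos_iff.2 h0; positivity
  rw [Complex.inner, Complex.div_re, Complex.normSq_eq_norm_sq]
  field_simp
  simp

namespace Crv
variable {L : ℝ} {l : ℝ → ℂ}

lemma bump_int (h : Crv L l) {c : ℝ → ℝ} (hc : Continuous c) (hp : ∀ x, c (x + L) = c x)
    (hz : ∀ᵐ z, fC L l c z = 0) (b : ℂ) {ρ : ℝ} (hρ : 0 < ρ) :
    ∫ t, c t * (π * max (ρ ^ 2 - ‖l t - b‖ ^ 2) 0) ∂(mu L) = 0 := by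
  obtain ⟨Mc, hMc⟩ := (h.BM_of hc hp).2
  obtain ⟨M, hM, hMb⟩ := bdd_of_periodic h.hL h.cont h.hper
  have hlm := h.cont.measurable
  have hcm := hc.measurable
  set R := ρ + ‖b‖ + M with hR
  set G : ℂ → ℝ := indicator (Metric.ball 0 R) (fun z => ‖z‖⁻¹) with hG
  have hGm : Measurable G := Measurable.indicator (by fun_prop) Metric.isOpen_ball.measurableSet
  have hGi : Integrable G := by
    rw [hG, integrable_indicator_iff Metric.isOpen_ball.measurableSet]
    exact integrableOn_inv_norm R
  have hGpi : Integrable (fun p : ℝ × ℂ => G (p.2 - l p.1)) ((mu L).prod volume) := by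
    rw [integrable_prod_iff (Measurable.aestronglyMeasurable (by fun_prop))]
    refine ⟨Eventually.of_forall fun t => hGi.comp_sub_right (l t), ?_⟩
    have : ∀ t, ∫ z, ‖G (z - l t)‖ = ∫ z, ‖G z‖ := fun t =>
      integral_sub_right_eq_self (fun z => ‖G z‖) (l t)
    simp only [this]
    exact integrable_const _
  set H : ℝ → ℂ → ℂ := fun t z => (c t : ℂ) *
    indicator (Metric.ball b ρ) (fun z => (z - b) / (z - l t)) z with hH
  have hHm : Measurable (Function.uncurry H) := by
    have e : Function.uncurry H = fun p : ℝ × ℂ => (c p.1 : ℂ) *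
        indicator (Prod.snd ⁻¹' (Metric.ball b ρ)) (fun p : ℝ × ℂ => (p.2 - b) / (p.2 - l p.1)) p := by
      funext p; rfl
    rw [e]
    refine Measurable.mul (by fun_prop) (Measurable.indicator (by fun_prop) ?_)
    exact measurable_snd Metric.isOpen_ball.measurableSet
  have hHi : Integrable (Function.uncurry H) ((mu L).prod volume) := by
    refine (hGpi.const_mul (Mc * ρ)).mono' hHm.aestronglyMeasurable (Eventually.of_forall ?_)
    rintro ⟨t, z⟩
    have hMc0 : 0 ≤ Mc := (abs_nonneg _).trans (hMc 0)
    simp only [Function.uncurry_apply_pair, hH]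
    by_cases hzb : z ∈ Metric.ball b ρ
    · rw [indicator_of_mem hzb, norm_mul, norm_div, Complex.norm_real]
      have h1 : ‖z - b‖ ≤ ρ := by rw [← dist_eq_norm]; exact (Metric.mem_ball.1 hzb).le
      have h2 : G (z - l t) = ‖z - l t‖⁻¹ := by
        rw [hG, indicator_of_mem]
        rw [mem_ball_zero_iff]
        have h1' : ‖z - b‖ < ρ := by rw [← dist_eq_norm]; exact (Metric.mem_ball.1 hzb)
        calc ‖z - l t‖ = ‖(z - b) + b - l t‖ := by congr 1; ring
          _ ≤ ‖z - b‖ + ‖b‖ + ‖l t‖ := (norm_sub_le _ _).trans (by gcongr; exact norm_add_le _ _)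
          _ < R := by linarith [hMb t]
      rw [h2, div_eq_mul_inv, ← mul_assoc]
      gcongr
      exact hMc t
    · rw [indicator_of_notMem hzb]
      have : 0 ≤ G (z - l t) := indicator_nonneg (fun _ _ => by positivity) _
      simp only [mul_zero, norm_zero]
      positivity
  have hsw := integral_integral_swap hHi
  have e1 : ∀ t, ∫ z, H t z = ((c t * (π * max (ρ ^ 2 - ‖l t - b‖ ^ 2) 0) : ℝ) : ℂ) := by
    intro t
    rw [integral_const_mul, bump b (l t) hρ]
    push_cast; ring
  have e2 : ∀ᵐ z, ∫ t, H t z ∂(mu L) = 0 := by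
    filter_upwards [hz] with z hz
    by_cases hzb : z ∈ Metric.ball b ρ
    · have : ∀ t, H t z = (z - b) * ((c t : ℂ) / (z - l t)) := fun t => by
        simp only [hH, indicator_of_mem hzb]; ring
      simp only [this]
      rw [integral_const_mul]
      have hz : ∫ t, (c t : ℂ) / (z - l t) ∂(mu L) = 0 := hz
      rw [hz, mul_zero]
    · have : ∀ t, H t z = 0 := fun t => by simp only [hH, indicator_of_notMem hzb, mul_zero]
      simp [this]
  rw [integral_congr_ae e2] at hsw
  simp only [e1, integral_zero, integral_complex_ofReal] at hsw
  exact_mod_cast hsw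

lemma fC_zero (h : Crv L l) {c : ℝ → ℝ} (hc : Continuous c) (hp : ∀ x, c (x + L) = c x)
    (hz : ∀ᵐ z, fC L l c z = 0) (s : ℝ) : c s = 0 := by
  by_contra hs
  have hL := h.hL
  have hl := h.cont
  obtain ⟨c₀, hc₀, ε₀, hε₀, H⟩ := h.chord
  have hev : ∀ᶠ t in 𝓝 s, 0 < c t * c s := by
    have h1 : ContinuousAt (fun t => c t * c s) s := by fun_prop
    exact h1.eventually (lt_mem_nhds (mul_self_pos.2 hs))
  obtain ⟨δ, hδ, hball⟩ := Metric.eventually_nhds_iff.1 hev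
  set ρ := c₀ * δ with hρ
  have hρp : 0 < ρ := by positivity
  have h0 := h.bump_int hc hp hz (l s) hρp
  set g : ℝ → ℝ := fun t => c t * (π * max (ρ ^ 2 - ‖l t - l s‖ ^ 2) 0) with hg
  have hgc : Continuous g := by rw [hg]; fun_prop
  have h1 : ∫ t in (0:ℝ)..L, g t = 0 := by
    rw [intervalIntegral.integral_of_le hL.le]; exact h0
  have hgp : Function.Periodic g L := fun t => by simp only [hg, hp, h.hper]
  have h2 := hgp.intervalIntegral_add_eq 0 (s - L/2)
  rw [zero_add, h1] at h2
  have h3 : 0 < ∫ t in (s - L/2)..(s - L/2 + L), g t * c s := by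
    apply intervalIntegral.integral_pos (by linarith) (by fun_prop)
    · intro t ht
      have e : g t * c s = (c t * c s) * (π * max (ρ ^ 2 - ‖l t - l s‖ ^ 2) 0) := by
        simp only [hg]; ring
      rw [e]
      by_cases htd : |t - s| < δ
      · have := hball (y := t) htd
        have := pi_pos
        positivity
      · have hh := H s (t - s) 0 (by rw [abs_le]; constructor <;> linarith [ht.1, ht.2])
          (by simpa using hε₀.le)
        simp only [Complex.ofReal_zero, mul_zero, add_zero, zero_mul, Complex.norm_real,
          Real.norm_eq_abs] at hh
        rw [show s + (t - s) = t by ring] at hh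
        have h5 : ρ ≤ ‖l t - l s‖ := le_trans (by rw [hρ]; gcongr; exact not_lt.1 htd) hh
        rw [max_eq_right]
        · simp
        · have := pow_le_pow_left₀ hρp.le h5 2
          linarith
    · refine ⟨s, ⟨by linarith, by linarith⟩, ?_⟩
      have e : g s * c s = (c s * c s) * (π * max (ρ ^ 2 - ‖l s - l s‖ ^ 2) 0) := by
        simp only [hg]; ring
      rw [e, sub_self, norm_zero]
      have : 0 < c s * c s := mul_self_pos.2 hs
      have h5 : max (ρ ^ 2 - 0 ^ 2) 0 = ρ ^ 2 := by
        rw [max_eq_left] <;> simp; positivity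
      rw [h5]
      have := pi_pos
      positivity
  rw [intervalIntegral.integral_mul_const, ← h2] at h3
  simp at h3

lemma PP_neg (h : Crv L l) {c : ℝ → ℝ} (hc : Continuous c) (hp : ∀ x, c (x + L) = c x)
    (hmean : ∫ t, c t ∂(mu L) = 0) (hne : ∃ s, c s ≠ 0) :
    PP L l c c < 0 ∧ Integrable (fun z => ‖fC L l c z‖ ^ 2) ∧
      ∫ z, ‖fC L l c z‖ ^ 2 = - (2 * π) * PP L l c c := by
  obtain ⟨h1, h2⟩ := h.Tform hc hp hc hp hmean
  have e : ∀ z, fC L l c z * starRingEnd ℂ (fC L l c z) = ((‖fC L l c z‖ ^ 2 : ℝ) : ℂ) := fun z => by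
    rw [Complex.mul_conj, Complex.normSq_eq_norm_sq]
  simp only [e] at h1 h2
  rw [integral_complex_ofReal, Complex.ofReal_re] at h2
  have h1 : Integrable (fun z => ‖fC L l c z‖ ^ 2) := by
    refine h1.re.congr (Eventually.of_forall fun z => ?_)
    exact Complex.ofReal_re _
  refine ⟨?_, h1, h2⟩
  have h3 : 0 ≤ ∫ z, ‖fC L l c z‖ ^ 2 := integral_nonneg fun z => by positivity
  by_contra hcon
  have h4 : ∫ z, ‖fC L l c z‖ ^ 2 = 0 := by
    apply le_antisymm _ h3
    rw [h2]
    nlinarith [pi_pos, not_lt.1 hcon]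
  rw [integral_eq_zero_iff_of_nonneg (fun z => by positivity) h1] at h4
  obtain ⟨s, hs⟩ := hne
  refine hs (h.fC_zero hc hp ?_ s)
  filter_upwards [h4] with z hz
  simpa using hz

lemma off_open (h : Crv L l) : IsOpen {z : ℂ | ∀ t, l t ≠ z} := by
  rw [Metric.isOpen_iff]
  intro z hz
  obtain ⟨s, -, hs⟩ := h.nearest z
  have hp : 0 < ‖l s - z‖ := norm_pos_iff.2 (sub_ne_zero.2 (hz s))
  refine ⟨_, hp, fun w hw t ht => ?_⟩
  have := hs t
  rw [Metric.mem_ball, dist_eq_norm, ← ht] at hw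
  linarith

lemma contOn (h : Crv L l) {g : ℝ → ℂ} (hg : Continuous g) :
    ContinuousOn (fun z => ∫ t in (0:ℝ)..L, g t / (l t - z)) {z : ℂ | ∀ t, l t ≠ z} := by
  rw [continuousOn_iff_continuous_domRestrict]
  exact h.cont_cauchy hg (X := {z : ℂ | ∀ t, l t ≠ z}) (p := fun x => x.1) continuous_subtype_val
    (fun x t => x.2 t)

lemma fC_eq (h : Crv L l) (c : ℝ → ℝ) (z : ℂ) :
    fC L l c z = - ∫ t in (0:ℝ)..L, (c t : ℂ) / (l t - z) := by
  rw [intervalIntegral.integral_of_le h.hL.le, ← integral_neg, fC, mu]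
  congr 1; funext t
  rw [← neg_sub, div_neg]

lemma fC_zero_ext (h : Crv L l) {c : ℝ → ℝ} (hc : Continuous c)
    (hz : ∀ᵐ z, wnd L l z = 0 → fC L l c z = 0) {z : ℂ} (hzo : ∀ t, l t ≠ z)
    (hw : wnd L l z = 0)
    (hdich : ∀ z, (∀ t, l t ≠ z) → wnd L l z = 0 ∨ wnd L l z = 2 * π * Complex.I) :
    fC L l c z = 0 := by
  by_contra hne
  have c1 : ContinuousOn (wnd L l) {z : ℂ | ∀ t, l t ≠ z} := h.contOn h.dcont
  have c2 : ContinuousOn (fC L l c) {z : ℂ | ∀ t, l t ≠ z} := by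
    have := (h.contOn (g := fun t => (c t : ℂ)) (by fun_prop)).neg
    refine this.congr fun z _ => h.fC_eq c z
  have o1 := c1.isOpen_inter_preimage h.off_open (isOpen_ne (x := 2 * π * Complex.I))
  have o2 := c2.isOpen_inter_preimage h.off_open (isOpen_ne (x := 0))
  have o := o1.inter o2
  have hpi : (2 * π * Complex.I : ℂ) ≠ 0 := by simp [pi_ne_zero]
  have hmem : z ∈ ({z : ℂ | ∀ t, l t ≠ z} ∩ wnd L l ⁻¹' {y | y ≠ 2 * π * Complex.I}) ∩
      ({z : ℂ | ∀ t, l t ≠ z} ∩ fC L l c ⁻¹' {y | y ≠ 0}) := by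
    refine ⟨⟨hzo, ?_⟩, hzo, hne⟩
    show wnd L l z ≠ _
    rw [hw]; exact hpi.symm
  have hnull := (o.measure_eq_zero_iff volume).1 (by
    refine measure_mono_null ?_ (ae_iff.1 hz)
    rintro w ⟨⟨hw1, hw2⟩, -, hw3⟩
    simp only [mem_ofPred_eq, Classical.not_imp]
    exact ⟨(hdich w hw1).resolve_right hw2, hw3⟩)
  rw [hnull] at hmem
  exact hmem

lemma par_deriv (h : Crv L l) (ε r : ℝ) :
    HasDerivAt (fun r => par l r ε) (deriv l r - Complex.I * ε * deriv (deriv l) r) r := by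
  unfold par
  exact (h.hd r).sub ((h.hdd r).const_mul _)

lemma u_const (h : Crv L l) {c : ℝ → ℝ} (hc : Continuous c) {ε : ℝ}
    (ho : ∀ s t, l t ≠ par l s ε) (hf : ∀ s, fC L l c (par l s ε) = 0) {s : ℝ} (hs : 0 ≤ s) :
    ∫ t, c t * log ‖par l s ε - l t‖ ∂(mu L) = ∫ t, c t * log ‖par l 0 ε - l t‖ ∂(mu L) := by
  have hl := h.cont
  have hdc := h.dcont
  have hddc := h.ddcont
  have hL := h.hL
  have hpc : Continuous (fun r => par l r ε) := by unfold par; fun_prop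
  set q : ℝ → ℝ → ℝ := fun r t =>
    c t * ((deriv l r - Complex.I * ε * deriv (deriv l) r) / (par l r ε - l t)).re with hq
  have hne : ∀ r t, par l r ε - l t ≠ 0 := fun r t => sub_ne_zero.2 (ho r t).symm
  have hqc : Continuous (Function.uncurry q) := by
    have h1 : Continuous fun p : ℝ × ℝ => par l p.1 ε := hpc.comp continuous_fst
    have : Continuous fun p : ℝ × ℝ =>
        (deriv l p.1 - Complex.I * ε * deriv (deriv l) p.1) / (par l p.1 ε - l p.2) :=
      Continuous.div (by fun_prop) (by fun_prop) (fun p => hne p.1 p.2)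
    exact (hc.comp continuous_snd).mul (Complex.continuous_re.comp this)
  have hlogc : ∀ r, Continuous fun t => c t * log ‖par l r ε - l t‖ := by
    intro r
    refine hc.mul (Continuous.log (by fun_prop) (fun t => norm_ne_zero_iff.2 (hne r t)))
  have hii : ∀ r, Integrable (fun t => c t * log ‖par l r ε - l t‖) (mu L) := fun r =>
    ((hlogc r).integrableOn_Icc (a := 0) (b := L)).mono_set Ioc_subset_Icc_self
  have h1 : ∀ t, ∫ r in (0:ℝ)..s, q r t =
      c t * log ‖par l s ε - l t‖ - c t * log ‖par l 0 ε - l t‖ := by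
    intro t
    apply intervalIntegral.integral_eq_sub_of_hasDerivAt
      (f := fun r => c t * log ‖par l r ε - l t‖)
    · intro r _
      exact (hasDerivAt_log_norm ((h.par_deriv ε r).sub_const (l t)) (hne r t)).const_mul (c t)
    · have : Continuous fun r => q r t := hqc.comp (by fun_prop : Continuous fun r : ℝ => (r, t))
      exact this.intervalIntegrable _ _
  have h2 : ∀ r, ∫ t, q r t ∂(mu L) = 0 := by
    intro r
    have i1 := h.div_int hc (ho r)
    have e : ∀ t, q r t = ((deriv l r - Complex.I * ε * deriv (deriv l) r) *
        ((c t : ℂ) / (par l r ε - l t))).re := by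
      intro t
      rw [hq]
      simp only
      rw [← Complex.re_ofReal_mul]
      congr 1; ring
    simp only [e]
    have i2 := i1.const_mul (deriv l r - Complex.I * ε * deriv (deriv l) r)
    have e3 := integral_re i2
    simp only [RCLike.re_eq_complex_re] at e3
    rw [e3, integral_const_mul]
    have := hf r
    unfold fC at this
    rw [this]; simp
  have hIntg : Integrable (Function.uncurry q) ((volume.restrict (uIoc 0 s)).prod (mu L)) := by
    unfold mu
    rw [Measure.prod_restrict]
    have := hqc.continuousOn.integrableOn_compact (μ := (volume : Measure (ℝ × ℝ)))
      (K := Icc 0 s ×ˢ Icc 0 L) (isCompact_Icc.prod isCompact_Icc)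
    refine this.mono_set (prod_mono ?_ Ioc_subset_Icc_self)
    rw [uIoc_of_le hs]; exact Ioc_subset_Icc_self
  have h3 := intervalIntegral_integral_swap hIntg
  simp only [h1, h2] at h3
  rw [integral_sub (hii s) (hii 0), intervalIntegral.integral_zero] at h3
  linarith

lemma strict (h : Crv L l) {c : ℝ → ℝ} (hc : Continuous c) (hp : ∀ x, c (x + L) = c x)
    (hmean : ∫ t, c t ∂(mu L) = 0) {ε₁ : ℝ} (hε₁ : 0 < ε₁)
    (H : ∀ s ε, 0 < ε → ε < ε₁ → (∀ t, l t ≠ par l s ε) ∧ fC L l c (par l s ε) = 0) :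
    PP L l c c = 0 := by
  obtain ⟨c₀, hc₀, ε₀, hε₀, HC⟩ := h.chord_nd
  obtain ⟨M, hM, hb⟩ := bdd_of_periodic h.hL h.cont h.hper
  obtain ⟨Mc, hMc⟩ := (h.BM_of hc hp).2
  have hMc0 : 0 ≤ Mc := (abs_nonneg _).trans (hMc 0)
  have hi := Gk_integrable L (q := 1/2) (by norm_num)
  have hlm := h.cont.measurable
  have hdm := h.dcont.measurable
  have hcm := hc.measurable
  set Bd : ℝ × ℝ → ℝ := fun p => Mc * Mc * ((2 * M + ε₀) + 2 * c₀ ^ (-(1/2) : ℝ) * Gk L (1/2) p.1 p.2)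
    with hBd
  have hBdm : Measurable Bd := by
    have := Gk_meas L (1/2)
    rw [hBd]; fun_prop
  have hBdi : Integrable Bd ((mu L).prod (mu L)) :=
    ((integrable_const (2 * M + ε₀)).add (hi.const_mul (2 * c₀ ^ (-(1/2) : ℝ)))).const_mul (Mc * Mc)
  set F : ℝ → ℝ × ℝ → ℝ := fun ε p => c p.1 * c p.2 * log ‖par l p.1 ε - l p.2‖ with hF
  have hFm : ∀ ε, Measurable (F ε) := by
    intro ε; simp only [hF, par]; fun_prop
  have hFb : ∀ ε, |ε| ≤ ε₀ → ∀ᵐ p ∂((mu L).prod (mu L)), ‖F ε p‖ ≤ Bd p := by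
    intro ε hε
    rw [Measure.ae_prod_iff_ae_ae (measurableSet_le (hFm ε).norm hBdm)]
    filter_upwards [ae_mu_mem L] with s hs
    filter_upwards [ae_mu_mem L, ae_nd L s] with t ht hnd
    obtain ⟨H1, H2⟩ := HC s ⟨hs.1.le, hs.2⟩ t ⟨ht.1.le, ht.2⟩ hnd ε hε
    have H2 := H2 (1/2) (by norm_num)
    have h1 := abs_log_le H1
    have h3 : ‖l t - par l s ε‖ ≤ 2 * M + ε₀ := by
      unfold par
      calc ‖l t - (l s - Complex.I * ε * deriv l s)‖ ≤ ‖l t‖ + (‖l s‖ + ‖Complex.I * ε * deriv l s‖) :=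
            (norm_sub_le _ _).trans (by gcongr; exact norm_sub_le _ _)
        _ ≤ 2 * M + ε₀ := by
            rw [norm_mul, norm_mul, h.harc, Complex.norm_I, Complex.norm_real, Real.norm_eq_abs]
            linarith [hb s, hb t]
    simp only [hF, hBd, Real.norm_eq_abs, abs_mul]
    rw [norm_sub_rev]
    gcongr
    · exact hMc s
    · exact hMc t
    · linarith
  have hlim : Tendsto (fun ε => ∫ p, F ε p ∂((mu L).prod (mu L))) (𝓝[>] 0) (𝓝 (PP L l c c)) := by
    apply tendsto_integral_filter_of_dominated_convergence Bd
    · exact Eventually.of_forall fun ε => (hFm ε).aestronglyMeasurable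
    · have : ∀ᶠ ε in 𝓝[>] (0:ℝ), ε ∈ Ioo 0 ε₀ := Ioo_mem_nhdsGT hε₀
      filter_upwards [this] with ε hε
      exact hFb ε (by rw [abs_of_pos hε.1]; exact hε.2.le)
    · exact hBdi
    · have o1 : IsOpen {p : ℝ × ℝ | l p.1 ≠ l p.2} := by
        have := h.cont
        exact isOpen_ne_fun (by fun_prop) (by fun_prop)
      have : ∀ᵐ p : ℝ × ℝ ∂((mu L).prod (mu L)), l p.1 ≠ l p.2 := by
        rw [Measure.ae_prod_iff_ae_ae o1.measurableSet]
        exact Eventually.of_forall fun s => h.ae_ne s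
      filter_upwards [this] with p hpn
      have h1 : ContinuousAt (fun ε : ℝ => F ε p) 0 := by
        simp only [hF, par]
        refine ContinuousAt.mul (by fun_prop) (ContinuousAt.log (by fun_prop) ?_)
        simp only [Complex.ofReal_zero, mul_zero, zero_mul, sub_zero]
        exact norm_ne_zero_iff.2 (sub_ne_zero.2 hpn)
      have h2 := h1.tendsto.mono_left (nhdsWithin_le_nhds (s := Ioi 0))
      convert h2 using 2
      simp [hF, par, ll]
  have hzero : ∀ᶠ ε in 𝓝[>] (0:ℝ), ∫ p, F ε p ∂((mu L).prod (mu L)) = 0 := by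
    have : ∀ᶠ ε in 𝓝[>] (0:ℝ), ε ∈ Ioo 0 (min ε₀ ε₁) := Ioo_mem_nhdsGT (lt_min hε₀ hε₁)
    filter_upwards [this] with ε hε
    have hIntg : Integrable (F ε) ((mu L).prod (mu L)) :=
      hBdi.mono' (hFm ε).aestronglyMeasurable
        (hFb ε (by rw [abs_of_pos hε.1]; exact hε.2.le.trans (min_le_left _ _)))
    rw [integral_prod _ hIntg]
    have hH := fun s => H s ε hε.1 (hε.2.trans_le (min_le_right _ _))
    have e : ∀ᵐ s ∂(mu L), ∫ t, F ε (s, t) ∂(mu L) =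
        c s * ∫ t, c t * log ‖par l 0 ε - l t‖ ∂(mu L) := by
      filter_upwards [ae_mu_mem L] with s hs
      rw [← h.u_const hc (fun s => (hH s).1) (fun s => (hH s).2) hs.1.le, ← integral_const_mul]
      congr 1; funext t
      simp only [hF]; ring
    rw [integral_congr_ae e, integral_mul_const, hmean, zero_mul]
  exact tendsto_nhds_unique hlim (tendsto_const_nhds.congr' (hzero.mono fun _ h => h.symm))

end Crv

lemma KA_eq {l : ℝ → ℂ} {s t : ℝ} (hst : l s ≠ l t) :
    KA l s t = (deriv l s / (l s - l t)).im := by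
  rw [KA, if_neg hst, Complex.div_im, dotR, normalv, Complex.normSq_eq_norm_sq]
  simp
  ring

namespace Crv
variable {L : ℝ} {l : ℝ → ℂ}

lemma lam_bounds (h : Crv L l)
    (horient : ∃ z₀ : ℂ, (∀ s, l s ≠ z₀) ∧ wnd L l z₀ = 2 * (π : ℂ) * Complex.I)
    {c : ℝ → ℝ} (hc : Continuous c) (hp : ∀ x, c (x + L) = c x)
    (hmean : ∫ t, c t ∂(mu L) = 0) (hne : ∃ s, c s ≠ 0) {r : ℝ}
    (hA : ∀ s, ∫ t, (deriv l s / (l s - l t)).im * c t ∂(mu L) = r * c s) :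
    -π < r ∧ r ≤ π := by
  obtain ⟨W1, W2, ε₁, hε₁, W3⟩ := h.winding horient
  obtain ⟨hP, i1, e1⟩ := h.PP_neg hc hp hmean hne
  obtain ⟨i2, e2⟩ := h.Bform W2 hc hp hc hp (Aa := fun s => r * c s) (by fun_prop)
    (fun x => by simp only [hp]) hA
  have hPr : PP L l (fun s => r * c s) c = r * PP L l c c := by
    unfold PP
    rw [← integral_const_mul]
    congr 1; funext p; ring
  rw [hPr] at e2
  have hpi : (2 * π * Complex.I : ℂ) ≠ 0 := by simp [pi_ne_zero]
  set G : ℂ → ℝ := fun z => (wnd L l z / (2 * π * Complex.I) *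
    (fC L l c z * starRingEnd ℂ (fC L l c z))).re with hG
  have iG : Integrable G := i2.re
  have eG : ∫ z, G z = r * PP L l c c - π * PP L l c c := by
    rw [← e2]; exact integral_re i2
  have hdich : ∀ᵐ z, (wnd L l z = 0 ∧ G z = 0) ∨ (wnd L l z ≠ 0 ∧ G z = ‖fC L l c z‖ ^ 2) := by
    filter_upwards [h.curve_null] with z hz
    rcases W1 z hz with hw | hw
    · left; simp [hG, hw]
    · right
      refine ⟨by rw [hw]; exact hpi, ?_⟩
      simp only [hG, hw]
      rw [div_self hpi, one_mul, Complex.mul_conj, Complex.ofReal_re, Complex.normSq_eq_norm_sq]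
  have hle : r ≤ π := by
    have : 0 ≤ ∫ z, G z := by
      apply integral_nonneg_of_ae
      filter_upwards [hdich] with z hz
      rcases hz with ⟨-, hz⟩ | ⟨-, hz⟩ <;> rw [hz] <;> simp
    rw [eG] at this
    nlinarith
  have hae : 0 ≤ᵐ[volume] fun z => ‖fC L l c z‖ ^ 2 - G z := by
    filter_upwards [hdich] with z hz
    rcases hz with ⟨-, hz⟩ | ⟨-, hz⟩ <;> rw [hz] <;> simp
  have e3 : ∫ z, (‖fC L l c z‖ ^ 2 - G z) = -(r + π) * PP L l c c := by
    rw [integral_sub i1 iG, e1, eG]; ring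
  refine ⟨?_, hle⟩
  by_contra hcon
  have h0 : ∫ z, (‖fC L l c z‖ ^ 2 - G z) = 0 := by
    apply le_antisymm _ (integral_nonneg_of_ae hae)
    rw [e3]
    nlinarith [not_lt.1 hcon]
  rw [integral_eq_zero_iff_of_nonneg_ae hae (i1.sub iG)] at h0
  have hz : ∀ᵐ z, wnd L l z = 0 → fC L l c z = 0 := by
    filter_upwards [h0, hdich] with z hz hd hw
    rcases hd with ⟨-, hd⟩ | ⟨hd, -⟩
    · rw [hd] at hz
      simpa using hz
    · exact absurd hw hd
  have := h.strict hc hp hmean hε₁ (fun s ε h1 h2 =>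
    ⟨(W3 s ε h1 h2).1, h.fC_zero_ext hc hz (W3 s ε h1 h2).1 (W3 s ε h1 h2).2 W1⟩)
  linarith

lemma main (h : Crv L l)
    (horient : ∃ z₀ : ℂ, (∀ s, l s ≠ z₀) ∧ wnd L l z₀ = 2 * (π : ℂ) * Complex.I)
    (φ : ℝ → ℂ) (hφc : Continuous φ) (hφper : ∀ x, φ (x + L) = φ x)
    (hφne : ∃ s, φ s ≠ 0) (lam : ℂ)
    (heig : ∀ s : ℝ, (∫ t in (0:ℝ)..L, (KA l s t : ℂ) * φ t) = lam * φ s) :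
    lam.im = 0 ∧ -π < lam.re ∧ lam.re ≤ π := by
  obtain ⟨W1, W2, -⟩ := id (h.winding horient)
  obtain ⟨C, hC, hK⟩ := h.K_bdd
  have hL := h.hL
  have hlm := h.cont.measurable
  have hdm := h.dcont.measurable
  have hφm := hφc.measurable
  obtain ⟨Mφ, hMφ, hφb⟩ := bdd_of_periodic hL hφc hφper
  set K : ℝ → ℝ → ℝ := fun s t => (deriv l s / (l s - l t)).im with hKdef
  have hKm : Measurable (Function.uncurry K) := Complex.measurable_im.comp (by fun_prop)
  have hKφ : ∀ s, ∫ t, (K s t : ℂ) * φ t ∂(mu L) = lam * φ s := by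
    intro s
    rw [← heig s, intervalIntegral.integral_of_le hL.le]
    apply integral_congr_ae
    have := h.ae_ne s
    unfold mu at this
    filter_upwards [this] with t ht
    rw [KA_eq ht]
  have hi2 : Integrable (Function.uncurry fun s t => (K s t : ℂ) * φ t) ((mu L).prod (mu L)) := by
    refine Integrable.of_bound (C := C * Mφ) ?_ (Eventually.of_forall fun p => ?_)
    · apply Measurable.aestronglyMeasurable
      exact (Complex.measurable_ofReal.comp hKm).mul (hφm.comp measurable_snd)
    · simp only [Function.uncurry_def, norm_mul, Complex.norm_real]
      gcongr
      · exact hK _ _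
      · exact hφb _
  have hi1 : ∀ s, Integrable (fun t => (K s t : ℂ) * φ t) (mu L) := by
    intro s
    refine Integrable.of_bound (C := C * Mφ) ?_ (Eventually.of_forall fun t => ?_)
    · apply Measurable.aestronglyMeasurable
      exact (Complex.measurable_ofReal.comp (hKm.comp (by fun_prop : Measurable fun t : ℝ => (s, t)))).mul hφm
    · rw [norm_mul, Complex.norm_real]
      gcongr
      · exact hK _ _
      · exact hφb _
  have hmean : lam * ∫ t, φ t ∂(mu L) = π * ∫ t, φ t ∂(mu L) := by
    have hsw := integral_integral_swap hi2
    simp only [hKφ] at hsw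
    rw [← integral_const_mul, hsw, ← integral_const_mul]
    congr 1; funext t
    rw [integral_mul_const, integral_complex_ofReal]
    have := W2 t
    rw [intervalIntegral.integral_of_le hL.le] at this
    unfold mu
    rw [this]
  by_cases hm : ∫ t, φ t ∂(mu L) = 0
  swap
  · have := mul_right_cancel₀ hm hmean
    rw [this]
    simp only [Complex.ofReal_im, Complex.ofReal_re, le_refl, and_true, true_and]
    linarith [pi_pos]
  have iφ : Integrable φ (mu L) :=
    (hφc.integrableOn_Icc (a := 0) (b := L)).mono_set Ioc_subset_Icc_self
  set a : ℝ → ℝ := fun t => (φ t).re with ha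
  set b : ℝ → ℝ := fun t => (φ t).im with hb
  have hac : Continuous a := Complex.continuous_re.comp hφc
  have hbc : Continuous b := Complex.continuous_im.comp hφc
  have hap : ∀ x, a (x + L) = a x := fun x => by simp only [ha, hφper]
  have hbp : ∀ x, b (x + L) = b x := fun x => by simp only [hb, hφper]
  have hma : ∫ t, a t ∂(mu L) = 0 := by
    have := integral_re iφ
    simp only [RCLike.re_eq_complex_re] at this
    rw [ha, this, hm]; rfl
  have hmb : ∫ t, b t ∂(mu L) = 0 := by
    have := integral_im iφ
    simp only [RCLike.im_eq_complex_im] at this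
    rw [hb, this, hm]; rfl
  have hAa : ∀ s, ∫ t, K s t * a t ∂(mu L) = lam.re * a s - lam.im * b s := by
    intro s
    have := integral_re (hi1 s)
    simp only [RCLike.re_eq_complex_re, Complex.re_ofReal_mul, hKφ] at this
    rw [this, Complex.mul_re]
  have hAb : ∀ s, ∫ t, K s t * b t ∂(mu L) = lam.im * a s + lam.re * b s := by
    intro s
    have := integral_im (hi1 s)
    simp only [RCLike.im_eq_complex_im, Complex.im_ofReal_mul, hKφ] at this
    rw [this, Complex.mul_im]; ring
  have hBMa := h.BM_of hac hap
  have hBMb := h.BM_of hbc hbp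
  have lin : ∀ (x y : ℝ) (d : ℝ → ℝ), BM d → PP L l (fun s => x * a s + y * b s) d =
      x * PP L l a d + y * PP L l b d := by
    intro x y d hd
    unfold PP
    rw [← integral_const_mul, ← integral_const_mul, ← integral_add
      ((h.PP_integrable hBMa hd).const_mul x) ((h.PP_integrable hBMb hd).const_mul y)]
    congr 1; funext p; ring
  have B1 := (h.Bform W2 hac hap hbc hbp (Aa := fun s => lam.re * a s + -lam.im * b s)
    (by fun_prop) (fun x => by simp only [hap, hbp]) (fun s => by rw [hAa]; ring)).2
  have B2 := (h.Bform W2 hbc hbp hac hap (Aa := fun s => lam.im * a s + lam.re * b s)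
    (by fun_prop) (fun x => by simp only [hap, hbp]) hAb).2
  have Bs : (∫ z, wnd L l z / (2 * π * Complex.I) * (fC L l a z * starRingEnd ℂ (fC L l b z))).re =
      (∫ z, wnd L l z / (2 * π * Complex.I) * (fC L l b z * starRingEnd ℂ (fC L l a z))).re := by
    have i1 := (h.Bform W2 hac hap hbc hbp (Aa := fun s => lam.re * a s + -lam.im * b s)
      (by fun_prop) (fun x => by simp only [hap, hbp]) (fun s => by rw [hAa]; ring)).1
    have i2 := (h.Bform W2 hbc hbp hac hap (Aa := fun s => lam.im * a s + lam.re * b s)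
      (by fun_prop) (fun x => by simp only [hap, hbp]) hAb).1
    have j1 := integral_re i1
    have j2 := integral_re i2
    simp only [RCLike.re_eq_complex_re] at j1 j2
    rw [← j1, ← j2]
    apply integral_congr_ae
    filter_upwards [h.curve_null] with z hz
    have hpi : (2 * π * Complex.I : ℂ) ≠ 0 := by simp [pi_ne_zero]
    rcases W1 z hz with hw | hw
    · simp [hw]
    · rw [hw, div_self hpi, one_mul, one_mul]
      simp only [Complex.mul_re, Complex.conj_re, Complex.conj_im]
      ring
  rw [B1, B2, lin _ _ _ hBMa, lin _ _ _ hBMb, PP_symm b a] at Bs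
  have hab : (∃ s, a s ≠ 0) ∨ (∃ s, b s ≠ 0) := by
    obtain ⟨s, hs⟩ := hφne
    by_contra! hcon
    exact hs (Complex.ext (hcon.1 s) (hcon.2 s))
  have hnonpos : ∀ d : ℝ → ℝ, Continuous d → (∀ x, d (x + L) = d x) → (∫ t, d t ∂(mu L) = 0) →
      PP L l d d ≤ 0 := by
    intro d hd hdp hdm
    by_cases hne : ∃ s, d s ≠ 0
    · exact (h.PP_neg hd hdp hdm hne).1.le
    · push Not at hne
      simp [PP, hne]
  have him : lam.im = 0 := by
    have h1 := hnonpos a hac hap hma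
    have h2 := hnonpos b hbc hbp hmb
    have h3 : PP L l a a + PP L l b b < 0 := by
      rcases hab with hh | hh
      · linarith [(h.PP_neg hac hap hma hh).1]
      · linarith [(h.PP_neg hbc hbp hmb hh).1]
    have h4 : lam.im * (PP L l a a + PP L l b b) = 0 := by linarith
    exact (mul_eq_zero.1 h4).resolve_right h3.ne
  refine ⟨him, ?_⟩
  rcases hab with hh | hh
  · exact h.lam_bounds horient hac hap hma hh (fun s => by rw [hAa, him]; ring)
  · exact h.lam_bounds horient hbc hbp hmb hh (fun s => by rw [hAb, him]; ring)

end Crv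

end DoubleLayer

/-- Every eigenvalue of the double layer operator `A` belongs to `(-π, π]`. -/
theorem double_layer_eigenvalues_real
    (L : ℝ) (hL : 0 < L) (l : ℝ → ℂ)
    (hsm : ContDiff ℝ (⊤ : ℕ∞) l) (hper : ∀ s, l (s + L) = l s)
    (harc : ∀ s, ‖deriv l s‖ = 1) (hinj : Set.InjOn l (Set.Ico 0 L))
    (horient : ∃ z₀ : ℂ, (∀ s, l s ≠ z₀) ∧
      (∫ t in (0:ℝ)..L, deriv l t / (l t - z₀)) = 2 * (π : ℂ) * Complex.I)
    (φ : ℝ → ℂ) (hφc : Continuous φ) (hφper : ∀ x, φ (x + L) = φ x)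
    (hφne : ∃ s, φ s ≠ 0) (lam : ℂ)
    (heig : ∀ s : ℝ, (∫ t in (0:ℝ)..L, (KA l s t : ℂ) * φ t) = lam * φ s) :
    lam.im = 0 ∧ -π < lam.re ∧ lam.re ≤ π := by
  exact Crv.main ⟨hL, hsm, hper, harc, hinj⟩ horient φ hφc hφper hφne lam heig
end
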